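/- arXiv:2306.09655 — 4 statements merged into one kernel-verified Lean document; each statement's English description precedes it below -/
import Mathlib

section
/- Let D be a strong digraph of order n ≥ 3 and let z be an arbitrary vertex of D. Suppose that d(x) + d(y) ≥ 2n−1 for every pair of non-adjacent vertices x, y ∈ V(D) \ {z}. Then D is Hamiltonian or D contains a directed cycle of length n−1. -/
/-! A digraph on a vertex type `V` is given by its arc relation `A : V → V → Prop`
(this automatically forbids multiple arcs); looplessness is expressed by the
hypothesis `Irreflexive A`. -/

/-- The degree of `x`: its out-degree plus its in-degree. -/
noncomputable def degree {V : Type*} (A : V → V → Prop) (x : V) : ℕ :=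
  {y | A x y}.ncard + {y | A y x}.ncard

/-- `degreeIn A x S` is the number of arcs between `x` and vertices of `S`,
in both directions. -/
noncomputable def degreeIn {V : Type*} (A : V → V → Prop) (x : V) (S : Set V) : ℕ :=
  {y ∈ S | A x y}.ncard + {y ∈ S | A y x}.ncard

/-- `c : Fin m → V` is a directed cycle of length `m` (indices taken mod `m`). -/
def IsCycle {V : Type*} (A : V → V → Prop) {m : ℕ} (c : Fin m → V) : Prop :=
  2 ≤ m ∧ Function.Injective c ∧
    ∀ i : Fin m, A (c i) (c ⟨(i.val + 1) % m, Nat.mod_lt _ i.pos⟩)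

/-- `p : Fin m → V` is a directed path on `m` vertices (of length `m - 1`). -/
def IsPath {V : Type*} (A : V → V → Prop) {m : ℕ} (p : Fin m → V) : Prop :=
  Function.Injective p ∧ ∀ (i : Fin m) (h : i.val + 1 < m), A (p i) (p ⟨i.val + 1, h⟩)

/-- A digraph is Hamiltonian if it has a directed cycle through all of its vertices. -/
def IsHamiltonian {V : Type*} [Fintype V] (A : V → V → Prop) : Prop :=
  ∃ c : Fin (Fintype.card V) → V, IsCycle A c ∧ Function.Surjective c

/-- Reachability by a directed path staying inside the set `S`. -/
def ReachIn {V : Type*} (A : V → V → Prop) (S : Set V) : V → V → Prop :=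
  Relation.ReflTransGen (fun u v => u ∈ S ∧ v ∈ S ∧ A u v)

/-- A digraph is strong if every vertex is reachable from every other by a directed path. -/
def IsStrong {V : Type*} (A : V → V → Prop) : Prop :=
  ∀ x y : V, Relation.ReflTransGen A x y

/-- A digraph is `k`-strong if it has at least `k + 1` vertices and the deletion of
any set of at most `k - 1` vertices leaves a strong digraph. -/
def IsKStrong {V : Type*} [Fintype V] (A : V → V → Prop) (k : ℕ) : Prop :=
  k + 1 ≤ Fintype.card V ∧
    ∀ S : Set V, S.ncard ≤ k - 1 → ∀ x ∈ Sᶜ, ∀ y ∈ Sᶜ, ReachIn A Sᶜ x y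

open Classical in
/-- The number of arcs between `x` and `y`, in both directions. -/
noncomputable def arcCount {V : Type*} (A : V → V → Prop) (x y : V) : ℕ :=
  (if A x y then 1 else 0) + (if A y x then 1 else 0)

/-- The list `l` enumerates, in cyclic order, the vertices of a closed walk without repetition. -/
structure IsCyclicList {V : Type*} (A : V → V → Prop) (l : List V) : Prop where
  ne_nil : l ≠ []
  nodup : l.Nodup
  chain : l.IsChain A
  closes : ∀ x ∈ l.getLast?, ∀ y ∈ l.head?, A x y

/-- The number of vertices of `l` other than `z`, plus the number of all vertices of `l`.
Comparing weights compares first the vertices other than `z` and then the presence of `z`. -/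
def vertexWeight {V : Type*} [DecidableEq V] (z : V) (l : List V) : ℕ :=
  (l.toFinset.erase z).card + l.toFinset.card

/-- A cycle of largest `vertexWeight`. -/
structure IsHeaviest {V : Type*} [DecidableEq V] (A : V → V → Prop) (z : V) (l : List V) :
    Prop where
  cyclic : IsCyclicList A l
  le : ∀ l', IsCyclicList A l' → vertexWeight z l' ≤ vertexWeight z l

/-- `P ++ S` is a cycle, and `R` is a detour avoiding it, through a vertex other than `z`, from
the last vertex of `P` to the first one. -/
structure IsBypass {V : Type*} (A : V → V → Prop) (z : V) (P S R : List V) : Prop where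
  ne_nil : P ≠ []
  cyclic : IsCyclicList A (P ++ S)
  cyclic' : IsCyclicList A (P ++ R)
  disjoint : S.Disjoint R
  exists_ne : ∃ x ∈ R, x ≠ z

/-- `Q` is a path with the same ends as `P`, through all vertices of `P` and some of `S`. -/
structure IsAbsorption {V : Type*} (A : V → V → Prop) (P S Q : List V) : Prop where
  nodup : Q.Nodup
  chain : Q.IsChain A
  head : Q.head? = P.head?
  last : Q.getLast? = P.getLast?
  subset : P ⊆ Q
  subset_append : Q ⊆ P ++ S

section Lists

variable {V : Type*} {A : V → V → Prop}

theorem arcCount_le_two (x y : V) : arcCount A x y ≤ 2 := by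
  unfold arcCount; split_ifs <;> omega

theorem arcCount_eq_zero {x y : V} (h : ¬ A x y) (h' : ¬ A y x) : arcCount A x y = 0 := by
  simp [arcCount, h, h']

theorem arcCount_add_arcCount_le_two {x s y : V} (h : A x y → ¬ A y s) (h' : A s y → ¬ A y x) :
    arcCount A x y + arcCount A s y ≤ 2 := by
  unfold arcCount
  by_cases h1 : A x y <;> by_cases h2 : A s y <;> by_cases h3 : A y x <;> by_cases h4 : A y s <;>
    simp_all

theorem arcCount_add_arcCount_le_three {x s y : V}
    (h : ¬ ((A x y ∧ A y s) ∧ (A s y ∧ A y x))) :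
    arcCount A x y + arcCount A s y ≤ 3 := by
  unfold arcCount
  by_cases h1 : A x y <;> by_cases h2 : A s y <;> by_cases h3 : A y x <;> by_cases h4 : A y s <;>
    simp_all

theorem degree_eq_sum_arcCount [Fintype V] (x : V) : degree A x = ∑ y, arcCount A x y := by
  classical
  simp only [degree, arcCount, Finset.sum_add_distrib, Finset.sum_boole, Set.ncard_eq_toFinset_card',
    Set.toFinset_ofPred, Nat.cast_id]

/-- A vertex that cannot be inserted between consecutive vertices of a path on `k` vertices
has at most `k + 1` arcs to it. -/
theorem sum_arcCount_le_length_add_one (s : V) (Q : List V)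
    (h : Q.IsChain fun a b => ¬ (A a s ∧ A s b)) :
    (Q.map (arcCount A s)).sum ≤ Q.length + 1 := by
  classical
  have key : ∀ (a : V) (l : List V), (a :: l).IsChain (fun a b => ¬ (A a s ∧ A s b)) →
      (if A a s then 1 else 0) + (l.map (arcCount A s)).sum ≤ l.length + 1 := by
    intro a l
    induction l generalizing a with
    | nil => intro _; simp; split_ifs <;> omega
    | cons b l ih =>
      intro hc
      rw [List.isChain_cons_cons] at hc
      have := ih b hc.2
      have h1 := hc.1
      simp only [List.map_cons, List.sum_cons, List.length_cons, arcCount] at this ⊢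
      split_ifs at this ⊢ <;> first | omega | (exfalso; tauto)
  cases Q with
  | nil => simp
  | cons a l =>
    have := key a l h
    simp only [List.map_cons, List.sum_cons, List.length_cons, arcCount] at this ⊢
    split_ifs at this ⊢ <;> omega

theorem sum_toFinset_arcCount_le [DecidableEq V] (s : V) {Q : List V} (hQ : Q.Nodup)
    (h : Q.IsChain fun a b => ¬ (A a s ∧ A s b)) :
    ∑ y ∈ Q.toFinset, arcCount A s y ≤ Q.toFinset.card + 1 := by
  rw [List.sum_toFinset _ hQ, List.toFinset_card_of_nodup hQ]
  exact sum_arcCount_le_length_add_one s Q h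

theorem not_isChain_insertable {s : V} {Q : List V}
    (h : ∀ l₁ a b l₂, Q = l₁ ++ a :: b :: l₂ → ¬ (A a s ∧ A s b)) :
    Q.IsChain fun a b => ¬ (A a s ∧ A s b) := by
  rw [List.isChain_iff_forall_rel_of_append_cons_cons]
  intro a b l₁ l₂ hl
  exact h l₁ a b l₂ hl

/-- A vertex from which the set `T` can be reached starts a path that avoids `T` and ends
with an arc into `T`. -/
theorem exists_path_into {T : Set V} {y c : V} (h : Relation.ReflTransGen A y c) (hc : c ∈ T)
    (hy : y ∉ T) : ∃ R : List V, R.Nodup ∧ R.IsChain A ∧ R.head? = some y ∧ (∀ a ∈ R, a ∉ T) ∧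
      ∃ c' ∈ T, ∀ a ∈ R.getLast?, A a c' := by
  induction h using Relation.ReflTransGen.head_induction_on with
  | refl => exact absurd hc hy
  | @head y y' hyy' _ ih =>
    by_cases hy' : y' ∈ T
    · exact ⟨[y], by simp, by simp, rfl, by simpa using hy, y', hy', by simpa using hyy'⟩
    obtain ⟨R, hn, hch, hh, hd, c', hc', hl⟩ := ih hy'
    by_cases hyR : y ∈ R
    · obtain ⟨l₁, l₂, rfl⟩ := List.append_of_mem hyR
      refine ⟨y :: l₂, (List.nodup_append.1 hn).2.1, (List.isChain_append.1 hch).2.1, rfl,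
        fun a ha => hd a (by simp_all), c', hc', ?_⟩
      simpa [List.getLast?_append] using hl
    · cases R with
      | nil => simp at hh
      | cons b R =>
        obtain rfl : b = y' := by simpa using hh
        refine ⟨y :: b :: R, by simp_all, by simp_all, rfl, ?_, c', hc', by simpa using hl⟩
        intro a ha
        rcases List.mem_cons.1 ha with rfl | ha
        · exact hy
        · exact hd a ha

theorem IsCyclicList.append_comm {l m : List V} (h : IsCyclicList A (l ++ m)) :
    IsCyclicList A (m ++ l) := by
  obtain ⟨h1, h2, h3, h4⟩ := h
  rcases eq_or_ne l [] with rfl | hl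
  · exact ⟨by simpa using h1, by simpa using h2, by simpa using h3, by simpa using h4⟩
  rcases eq_or_ne m [] with rfl | hm
  · exact ⟨by simpa using h1, by simpa using h2, by simpa using h3, by simpa using h4⟩
  rw [List.isChain_append] at h3
  rw [List.getLast?_append_of_ne_nil _ hm, List.head?_append_of_ne_nil _ hl] at h4
  refine ⟨by simp [hl], (List.perm_append_comm.nodup_iff).1 h2, ?_, ?_⟩
  · exact List.isChain_append.2 ⟨h3.2.1, h3.1, h4⟩
  · rw [List.getLast?_append_of_ne_nil _ hl, List.head?_append_of_ne_nil _ hm]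
    exact h3.2.2

theorem isCyclicList_append_iff {l m : List V} (hl : l ≠ []) (hm : m ≠ []) :
    IsCyclicList A (l ++ m) ↔ l.Nodup ∧ m.Nodup ∧ l.Disjoint m ∧ l.IsChain A ∧ m.IsChain A ∧
      (∀ x ∈ l.getLast?, ∀ y ∈ m.head?, A x y) ∧ (∀ x ∈ m.getLast?, ∀ y ∈ l.head?, A x y) := by
  constructor
  · rintro ⟨h1, h2, h3, h4⟩
    rw [List.isChain_append] at h3
    rw [List.getLast?_append_of_ne_nil _ hm, List.head?_append_of_ne_nil _ hl] at h4
    rw [List.nodup_append'] at h2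
    exact ⟨h2.1, h2.2.1, h2.2.2, h3.1, h3.2.1, h3.2.2, h4⟩
  · rintro ⟨h1, h2, h3, h4, h5, h6, h7⟩
    refine ⟨by simp [hl], List.nodup_append'.2 ⟨h1, h2, h3⟩, List.isChain_append.2 ⟨h4, h5, h6⟩, ?_⟩
    rw [List.getLast?_append_of_ne_nil _ hm, List.head?_append_of_ne_nil _ hl]
    exact h7

theorem IsCyclicList.reverse {l : List V} (h : IsCyclicList A l) :
    IsCyclicList (fun a b => A b a) l.reverse := by
  obtain ⟨h1, h2, h3, h4⟩ := h
  refine ⟨by simpa using h1, by simpa using h2, List.isChain_reverse.2 h3, ?_⟩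
  intro x hx y hy
  exact h4 y (by simpa using hy) x (by simpa using hx)

theorem IsCyclicList.insert {l₁ l₂ : List V} {a b w : V}
    (h : IsCyclicList A (l₁ ++ a :: b :: l₂)) (hw : w ∉ l₁ ++ a :: b :: l₂) (haw : A a w)
    (hwb : A w b) : IsCyclicList A (l₁ ++ a :: w :: b :: l₂) := by
  obtain ⟨h1, h2, h3, h4⟩ := h
  refine ⟨by simp, ?_, ?_, ?_⟩
  · grind
  · rw [List.isChain_append_cons_cons] at h3 ⊢
    exact ⟨h3.1, haw, List.isChain_cons_cons.2 ⟨hwb, h3.2.2⟩⟩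
  · intro x hx y hy
    refine h4 x ?_ y ?_
    · simpa [List.getLast?_append] using hx
    · cases l₁ <;> simpa using hy

theorem IsBypass.reverse {z : V} {P S R : List V} (h : IsBypass A z P S R) :
    IsBypass (fun a b => A b a) z P.reverse S.reverse R.reverse := by
  obtain ⟨h1, h2, h3, h4, h5⟩ := h
  refine ⟨by simpa using h1, ?_, ?_, by simpa [List.Disjoint] using h4, by simpa using h5⟩
  · rw [← List.reverse_append]; exact h2.append_comm.reverse
  · rw [← List.reverse_append]; exact h3.append_comm.reverse

/-- In a bypass with `S` as short as possible, no path that leaves the cycle as `R` does and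
goes through a vertex `x ≠ z` of `R` returns to the cycle inside `S`, except possibly through
`z` as the first vertex of `R`. -/
theorem IsBypass.not_shorter {z : V} {P S R : List V} (h : IsBypass A z P S R)
    (hmin : ∀ P' S' R', IsBypass A z P' S' R' → (P' ++ S').Perm (P ++ S) →
      S.length ≤ S'.length) {x s : V} (hx : x ∈ R) (hxz : x ≠ z) (hs : s ∈ S) :
    ¬ A x s ∧ ∀ w, w ∉ P ++ S → A x w → A w s → w = z ∧ R.head? = some z := by
  have hR : R ≠ [] := List.ne_nil_of_mem hx
  have hS : S ≠ [] := List.ne_nil_of_mem hs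
  have hP := h.ne_nil
  obtain ⟨n1, n2, d1, c1, c2, j1, j2⟩ := (isCyclicList_append_iff hP hS).1 h.cyclic
  obtain ⟨-, n3, d2, -, c3, j3, j4⟩ := (isCyclicList_append_iff hP hR).1 h.cyclic'
  have d3 := h.disjoint
  have main : ∀ W : List V, W.Nodup → W.IsChain A → W.head? = R.head? →
      (∀ y ∈ W, y ∉ P ++ S) → (∃ y ∈ W, y ≠ z) → (∀ y ∈ W.getLast?, A y s) → False := by
    intro W w1 w2 w3 w4 w5 w6
    obtain ⟨S₁, S₂, rfl⟩ := List.append_of_mem hs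
    have hW : W ≠ [] := by
      obtain ⟨y, hy, -⟩ := w5
      exact List.ne_nil_of_mem hy
    have hj : ∀ u ∈ P.getLast?, ∀ y ∈ W.head?, A u y := by
      rw [w3]; exact j3
    have hcyc : IsCyclicList A ((s :: S₂ ++ P) ++ S₁) := by
      have := h.cyclic
      rw [← List.append_assoc] at this
      simpa using this.append_comm
    have hperm : ((s :: S₂ ++ P) ++ S₁).Perm (P ++ (S₁ ++ s :: S₂)) := by
      rw [List.append_assoc]
      refine List.perm_append_comm.trans ?_
      simp
    have := hmin (s :: S₂ ++ P) S₁ W ⟨by simp, hcyc, ?_, ?_, w5⟩ hperm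
    · simp at this
    · refine (isCyclicList_append_iff (by simp) hW).2 ⟨?_, w1, ?_, ?_, w2, ?_, ?_⟩
      · exact (List.nodup_append'.1 hcyc.nodup).1
      · intro a ha haW
        exact w4 a haW (hperm.subset (List.mem_append_left _ ha))
      · exact (List.isChain_append.1 hcyc.chain).1
      · rw [List.getLast?_append_of_ne_nil _ hP]; exact hj
      · simpa using w6
    · intro a ha haW
      exact w4 a haW (by simp [ha])
  obtain ⟨R₁, R₂, rfl⟩ := List.append_of_mem hx
  have hout : ∀ y ∈ R₁ ++ x :: R₂, y ∉ P ++ S := by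
    intro y hy hy'
    rcases List.mem_append.1 hy' with hy' | hy'
    · exact d2 hy' hy
    · exact d3 hy' hy
  have hsplit := List.isChain_split.1 c3
  refine ⟨fun hxs => main (R₁ ++ [x]) (by grind) hsplit.1 (by cases R₁ <;> simp)
    (fun y hy => hout y (by grind)) ⟨x, by simp, hxz⟩ (by simpa using hxs), ?_⟩
  intro w hw hxw hws
  by_cases hwR : w ∈ R₁
  · obtain ⟨R₃, R₄, rfl⟩ := List.append_of_mem hwR
    by_contra hcon
    have hc : (R₃ ++ [w]).IsChain A := by
      have := hsplit.1
      rw [List.append_assoc, List.cons_append, List.isChain_split] at this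
      exact this.1
    refine main (R₃ ++ [w]) (by grind) hc (by cases R₃ <;> simp)
      (fun y hy => hout y (by grind)) ?_ (by simpa using hws)
    by_contra! hall
    have hwz : w = z := hall w (by simp)
    cases R₃ with
    | nil => simp [hwz] at hcon
    | cons b R₃ =>
      have hbz : b = z := hall b (by simp)
      subst hwz hbz
      simp at n3
  · exfalso
    have hwx : w ≠ x := by
      rintro rfl
      exact main (R₁ ++ [w]) (by grind) hsplit.1 (by cases R₁ <;> simp)
        (fun y hy => hout y (by grind)) ⟨w, by simp, hxz⟩ (by simpa using hws)
    refine main (R₁ ++ [x, w]) (by grind) ?_ (by cases R₁ <;> simp) ?_ ⟨x, by simp, hxz⟩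
      (by simpa using hws)
    · exact List.isChain_append_cons_cons.2 ⟨hsplit.1, hxw, by simp⟩
    · intro y hy
      by_cases hyw : y = w
      · rw [hyw]; exact hw
      · exact hout y (by grind)

theorem IsBypass.not_shorter_reverse {z : V} {P S R : List V} (h : IsBypass A z P S R)
    (hmin : ∀ P' S' R', IsBypass A z P' S' R' → (P' ++ S').Perm (P ++ S) →
      S.length ≤ S'.length) {x s : V} (hx : x ∈ R) (hxz : x ≠ z) (hs : s ∈ S) :
    ¬ A s x ∧ ∀ w, w ∉ P ++ S → A w x → A s w → w = z ∧ R.getLast? = some z := by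
  have := h.reverse.not_shorter (x := x) (s := s) ?_ (by simpa using hx) hxz (by simpa using hs)
  · simpa using this
  · intro P' S' R' h' hp
    have := hmin _ _ _ h'.reverse ?_
    · simpa using this
    · exact ((P'.reverse_perm.append S'.reverse_perm).trans hp).trans
        (P.reverse_perm.append S.reverse_perm)

theorem exists_isCyclicList [Fintype V] (hirr : ∀ v, ¬ A v v) (hstrong : IsStrong A)
    (hn : 2 ≤ Fintype.card V) : ∃ l, IsCyclicList A l := by
  obtain ⟨a, b, hab⟩ := Fintype.exists_pair_of_one_lt_card hn
  obtain ⟨y, hay, -⟩ := (Relation.ReflTransGen.cases_head (hstrong a b)).resolve_left hab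
  have hya : y ∉ ({a} : Set V) := by
    rintro rfl
    exact hirr _ hay
  obtain ⟨R, h1, h2, h3, h4, c, rfl, h5⟩ :=
    exists_path_into (hstrong y a) (T := {a}) rfl hya
  have hR : R ≠ [] := by rintro rfl; simp at h3
  refine ⟨[c] ++ R, (isCyclicList_append_iff (by simp) hR).2
    ⟨by simp, h1, ?_, by simp, h2, by simpa [h3] using hay, by simpa using h5⟩⟩
  exact fun a ha haR => h4 a haR (by simpa using ha)

/-- An arc from a cycle to a vertex `y ≠ z` outside starts a bypass. -/
theorem exists_isBypass_of_arc {z : V} (hstrong : IsStrong A) {C : List V} (hC : IsCyclicList A C)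
    {c y : V} (hc : c ∈ C) (hy : y ∉ C) (hyz : y ≠ z) (hcy : A c y) :
    ∃ P S R, IsBypass A z P S R ∧ (P ++ S).Perm C := by
  obtain ⟨R, h1, h2, h3, h4, c', hc', h5⟩ :=
    exists_path_into (hstrong y c) (T := {a | a ∈ C}) hc hy
  have hyR : y ∈ R := List.mem_of_mem_head? h3
  have hR : R ≠ [] := List.ne_nil_of_mem hyR
  obtain ⟨l₁, l₂, rfl⟩ := List.append_of_mem hc
  have e1 : (l₂ ++ (l₁ ++ [c])).Perm (l₁ ++ c :: l₂) := by
    refine List.perm_append_comm.trans ?_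
    simp
  have hC1 : IsCyclicList A ((l₂ ++ l₁) ++ [c]) := by
    have : IsCyclicList A ((l₁ ++ [c]) ++ l₂) := by simpa using hC
    simpa using this.append_comm
  have hc'' : c' ∈ (l₂ ++ l₁) ++ [c] := by
    have : c' ∈ l₁ ++ c :: l₂ := hc'
    grind
  obtain ⟨S, P, hSP⟩ := List.append_of_mem hc''
  have hlast : (c' :: P).getLast? = some c := by
    have := congrArg List.getLast? hSP
    rw [List.getLast?_append_of_ne_nil _ (by simp)] at this
    rw [List.getLast?_append_of_ne_nil _ (by simp)] at this
    simpa using this.symm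
  rw [hSP] at hC1
  have hcyc := hC1.append_comm
  have hperm : ((c' :: P) ++ S).Perm (l₁ ++ c :: l₂) := by
    refine List.perm_append_comm.trans ?_
    rw [← hSP, List.append_assoc]
    exact e1
  refine ⟨c' :: P, S, R, ⟨by simp, hcyc, ?_, ?_, y, hyR, hyz⟩, hperm⟩
  · refine (isCyclicList_append_iff (by simp) hR).2
      ⟨(List.nodup_append'.1 hcyc.nodup).1, h1, ?_, (List.isChain_append.1 hcyc.chain).1, h2, ?_, ?_⟩
    · intro a ha haR
      exact h4 a haR (hperm.subset (List.mem_append_left _ ha))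
    · rw [hlast, h3]
      simpa using hcy
    · simpa using h5
  · intro a ha haR
    exact h4 a haR (hperm.subset (List.mem_append_right _ ha))

theorem IsStrong.swap (hstrong : IsStrong A) : IsStrong fun a b => A b a := fun x y => by
  have := hstrong y x
  rwa [← Relation.reflTransGen_swap] at this

theorem exists_isBypass_of_arc_reverse {z : V} (hstrong : IsStrong A) {C : List V}
    (hC : IsCyclicList A C) {c y : V} (hc : c ∈ C) (hy : y ∉ C) (hyz : y ≠ z) (hyc : A y c) :
    ∃ P S R, IsBypass A z P S R ∧ (P ++ S).Perm C := by
  obtain ⟨P, S, R, h, hp⟩ := exists_isBypass_of_arc (z := z) hstrong.swap hC.reverse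
    (by simpa using hc) (by simpa using hy) hyz hyc
  exact ⟨_, _, _, h.reverse, ((P.reverse_perm.append S.reverse_perm).trans hp).trans
    C.reverse_perm⟩

theorem IsCyclicList.two_le_length (hirr : ∀ v, ¬ A v v) {C : List V} (h : IsCyclicList A C) :
    2 ≤ C.length := by
  obtain ⟨h1, -, -, h4⟩ := h
  match C with
  | [] => simp at h1
  | [a] => exact absurd (h4 a (by simp) a (by simp)) (hirr a)
  | a :: b :: l => simp

theorem IsCyclicList.exists_mem_ne (hirr : ∀ v, ¬ A v v) {C : List V} (h : IsCyclicList A C)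
    (z : V) : ∃ s ∈ C, s ≠ z := by
  have h1 := h.two_le_length hirr
  have h2 := h.nodup
  match C with
  | a :: b :: l =>
    by_cases ha : a = z
    · exact ⟨b, by simp, fun hb => by simp [ha, hb] at h2⟩
    · exact ⟨a, by simp, ha⟩

theorem IsBypass.not_head_last {z : V} {P S R : List V} (h : IsBypass A z P S R) :
    ¬ (R.head? = some z ∧ R.getLast? = some z) := by
  rintro ⟨e1, e2⟩
  have nR : R.Nodup := (List.nodup_append'.1 h.cyclic'.nodup).2.1
  obtain ⟨x, hx, hxz⟩ := h.exists_ne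
  cases R with
  | nil => simp at hx
  | cons b R =>
    obtain rfl : b = z := by simpa using e1
    rcases List.eq_nil_or_concat' R with rfl | ⟨R', c, rfl⟩
    · exact hxz (by simpa using hx)
    · rw [← List.cons_append, List.getLast?_append] at e2
      have e2 : c = b := by simpa using e2
      subst e2
      simp at nR

end Lists

section Weight

variable {V : Type*} [DecidableEq V] {A : V → V → Prop} {z : V}

theorem vertexWeight_perm {l m : List V} (h : l.Perm m) : vertexWeight z l = vertexWeight z m := by
  unfold vertexWeight
  rw [List.toFinset_eq_of_perm _ _ h]

theorem vertexWeight_lt_of_subset {l m : List V} {w : V} (h : l ⊆ m) (hw : w ∈ m) (hwl : w ∉ l) :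
    vertexWeight z l < vertexWeight z m := by
  have h' : l.toFinset ⊆ m.toFinset := fun a ha => by simpa using h (by simpa using ha)
  have h1 : l.toFinset.card < m.toFinset.card := Finset.card_lt_card
    (Finset.ssubset_iff_subset_ne.2 ⟨h', fun he => hwl (by
      rw [← List.mem_toFinset, he]; simpa using hw)⟩)
  have h2 := Finset.card_le_card (Finset.erase_subset_erase z h')
  unfold vertexWeight
  omega

theorem vertexWeight_lt_of_mem {l m : List V} {w : V} (h : ∀ a ∈ l, a ≠ z → a ∈ m) (hw : w ∈ m)
    (hwl : w ∉ l) (hwz : w ≠ z) : vertexWeight z l < vertexWeight z m := by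
  have h' : l.toFinset.erase z ⊆ (m.toFinset.erase z).erase w := fun a ha => by
    simp only [Finset.mem_erase, List.mem_toFinset] at ha ⊢
    exact ⟨fun e => hwl (e ▸ ha.2), ha.1, h a ha.2 ha.1⟩
  have h1 := Finset.card_le_card h'
  have hw' : w ∈ m.toFinset.erase z := by simp [hw, hwz]
  have h2 := Finset.card_erase_add_one hw'
  have h3 := Finset.card_le_card (Finset.erase_subset z m.toFinset)
  have h4 := Finset.pred_card_le_card_erase (s := l.toFinset) (a := z)
  by_cases hz : z ∈ m
  · have h5 := Finset.card_erase_add_one (s := m.toFinset) (a := z) (by simpa using hz)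
    unfold vertexWeight
    omega
  · have h5 := Finset.erase_eq_of_notMem (s := m.toFinset) (a := z) (by simpa using hz)
    rw [h5] at h2 h1
    unfold vertexWeight
    rw [h5]
    omega

theorem IsHeaviest.perm {l m : List V} (h : IsHeaviest A z l) (hm : IsCyclicList A m)
    (hp : l.Perm m) : IsHeaviest A z m :=
  ⟨hm, fun l' hl' => (h.le l' hl').trans (vertexWeight_perm hp).le⟩

theorem IsHeaviest.not_insert {l₁ l₂ : List V} {a b w : V}
    (h : IsHeaviest A z (l₁ ++ a :: b :: l₂)) (hw : w ∉ l₁ ++ a :: b :: l₂) :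
    ¬ (A a w ∧ A w b) := by
  rintro ⟨haw, hwb⟩
  have h1 := h.le _ (h.cyclic.insert hw haw hwb)
  have h2 : vertexWeight z (l₁ ++ a :: b :: l₂) < vertexWeight z (l₁ ++ a :: w :: b :: l₂) :=
    vertexWeight_lt_of_subset (w := w) (fun c hc => by grind) (by simp) hw
  omega

theorem IsHeaviest.not_insert_link {l m : List V} {w : V} (h : IsHeaviest A z (l ++ m))
    (hl : l ≠ []) (hm : m ≠ []) (hw : w ∉ l ++ m) :
    ¬ (A (l.getLast hl) w ∧ A w (m.head hm)) := by
  obtain ⟨b, m, rfl⟩ := List.exists_cons_of_ne_nil hm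
  obtain ⟨l, a, rfl⟩ := List.eq_nil_or_concat' l |>.resolve_left hl
  simp only [List.append_assoc, List.cons_append, List.nil_append] at h hw
  simpa using h.not_insert hw

theorem exists_isHeaviest [Fintype V] (h : ∃ l, IsCyclicList A l) (z : V) :
    ∃ l, IsHeaviest A z l := by
  classical
  let p : ℕ → Prop := fun k => ∃ l, IsCyclicList A l ∧ vertexWeight z l = k
  have hb : ∀ l, vertexWeight z l ≤ 2 * Fintype.card V := fun l => by
    have h1 := Finset.card_le_univ (l.toFinset.erase z)
    have h2 := Finset.card_le_univ l.toFinset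
    unfold vertexWeight
    omega
  obtain ⟨l₀, hl₀⟩ := h
  obtain ⟨l, hl, hle⟩ := Nat.findGreatest_spec (P := p) (hb l₀) ⟨l₀, hl₀, rfl⟩
  refine ⟨l, hl, fun l' hl' => ?_⟩
  rw [hle]
  exact Nat.le_findGreatest (hb l') ⟨l', hl', rfl⟩

theorem exists_isBypass [Fintype V] (hirr : ∀ v, ¬ A v v) (hstrong : IsStrong A)
    (hdeg : ∀ x y : V, x ≠ z → y ≠ z → x ≠ y → ¬ A x y → ¬ A y x →
      2 * Fintype.card V - 1 ≤ degree A x + degree A y)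
    {C : List V} (hC : IsCyclicList A C) {x : V} (hx : x ∉ C) (hxz : x ≠ z) :
    ∃ P S R, IsBypass A z P S R ∧ (P ++ S).Perm C := by
  by_contra hcon
  have hno : ∀ c ∈ C, ∀ y, y ∉ C → y ≠ z → ¬ A c y ∧ ¬ A y c := fun c hc y hy hyz =>
    ⟨fun h => hcon (exists_isBypass_of_arc hstrong hC hc hy hyz h),
      fun h => hcon (exists_isBypass_of_arc_reverse hstrong hC hc hy hyz h)⟩
  obtain ⟨s, hs, hsz⟩ := hC.exists_mem_ne hirr z
  have hxs : x ≠ s := fun h => hx (h ▸ hs)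
  have h1 := hdeg x s hxz hsz hxs (hno s hs x hx hxz).2 (hno s hs x hx hxz).1
  have hbound : ∀ y, arcCount A x y + arcCount A s y +
      ((if y = x then 2 else 0) + (if y = s then 2 else 0)) ≤ 2 + (if y = z then 2 else 0) := by
    intro y
    have h2 := arcCount_le_two (A := A) x y
    have h3 := arcCount_le_two (A := A) s y
    by_cases hyx : y = x
    · subst hyx
      rw [arcCount_eq_zero (hirr _) (hirr _), arcCount_eq_zero (hno s hs y hx hxz).1
        (hno s hs y hx hxz).2]
      simp [hxs]
    by_cases hys : y = s
    · subst hys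
      rw [arcCount_eq_zero (hirr _) (hirr _), arcCount_eq_zero (hno y hs x hx hxz).2
        (hno y hs x hx hxz).1]
      simp [hxs.symm]
    rw [if_neg hyx, if_neg hys]
    by_cases hyz : y = z
    · rw [if_pos hyz]; omega
    by_cases hyC : y ∈ C
    · rw [arcCount_eq_zero (hno y hyC x hx hxz).2 (hno y hyC x hx hxz).1]; omega
    · rw [arcCount_eq_zero (hno s hs y hyC hyz).1 (hno s hs y hyC hyz).2]; omega
  have hsum := Finset.sum_le_sum fun y (_ : y ∈ Finset.univ) => hbound y
  rw [degree_eq_sum_arcCount, degree_eq_sum_arcCount] at h1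
  simp only [Finset.sum_add_distrib, Finset.sum_ite_eq', Finset.mem_univ, if_true,
    Finset.sum_const, Finset.card_univ, smul_eq_mul] at hsum
  omega

end Weight

section Absorption

variable {V : Type*} {A : V → V → Prop} {z : V} {P S R Q : List V}

/-- An absorption of largest length admits no further insertion of vertices of `S`. -/
theorem exists_maximal_absorption (h : IsBypass A z P S R) :
    ∃ Q, IsAbsorption A P S Q ∧
      ∀ s ∈ S, s ∉ Q → Q.IsChain fun a b => ¬ (A a s ∧ A s b) := by
  classical
  let p : ℕ → Prop := fun k => ∃ Q, IsAbsorption A P S Q ∧ Q.length = k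
  have hb : ∀ Q, IsAbsorption A P S Q → Q.length ≤ (P ++ S).length := fun Q hQ =>
    (hQ.nodup.subperm hQ.subset_append).length_le
  have h0 : IsAbsorption A P S P :=
    ⟨(List.nodup_append'.1 h.cyclic.nodup).1, (List.isChain_append.1 h.cyclic.chain).1, rfl, rfl,
      List.Subset.refl P, List.subset_append_left P S⟩
  obtain ⟨Q, hQ, hle⟩ := Nat.findGreatest_spec (P := p) (hb P h0) ⟨P, h0, rfl⟩
  refine ⟨Q, hQ, fun s hs hsQ => not_isChain_insertable ?_⟩
  rintro l₁ a b l₂ rfl ⟨has, hsb⟩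
  have hQ' : IsAbsorption A P S (l₁ ++ a :: s :: b :: l₂) := by
    obtain ⟨h1, h2, h3, h4, h5, h6⟩ := hQ
    refine ⟨by grind, ?_, ?_, ?_, fun c hc => by have := h5 hc; grind,
      fun c hc => ?_⟩
    · rw [List.isChain_append_cons_cons] at h2 ⊢
      exact ⟨h2.1, has, List.isChain_cons_cons.2 ⟨hsb, h2.2.2⟩⟩
    · rw [← h3]; cases l₁ <;> simp
    · rw [← h4]; simp [List.getLast?_append]
    · have := @h6 c
      by_cases hcs : c = s
      · rw [hcs]; simp [hs]
      · exact this (by grind)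
  have := Nat.le_findGreatest (P := p) (hb _ hQ') ⟨_, hQ', rfl⟩
  rw [← hle] at this
  simp at this

variable [DecidableEq V]

/-- An absorption misses a vertex of `S` other than `z`. -/
theorem IsAbsorption.exists_notMem (hheavy : IsHeaviest A z (P ++ S)) (h : IsBypass A z P S R)
    (hQ : IsAbsorption A P S Q) : ∃ s ∈ S, s ∉ Q ∧ s ≠ z := by
  by_contra! hcon
  obtain ⟨x, hx, hxz⟩ := h.exists_ne
  have hR : R ≠ [] := List.ne_nil_of_mem hx
  obtain ⟨-, n2, d2, -, c2, j1, j2⟩ := (isCyclicList_append_iff h.ne_nil hR).1 h.cyclic'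
  have hQne : Q ≠ [] := by
    rintro rfl
    exact h.ne_nil (List.subset_nil.1 hQ.subset)
  have hdis : ∀ a ∈ R, a ∉ P ++ S := fun a ha haC => by
    rcases List.mem_append.1 haC with h' | h'
    · exact d2 h' ha
    · exact h.disjoint h' ha
  have hcyc : IsCyclicList A (Q ++ R) := by
    refine (isCyclicList_append_iff hQne hR).2 ⟨hQ.nodup, n2, ?_, hQ.chain, c2, ?_, ?_⟩
    · exact fun a ha haR => hdis a haR (hQ.subset_append ha)
    · rw [hQ.last]; exact j1
    · rw [hQ.head]; exact j2
  have h1 := hheavy.le _ hcyc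
  have h2 : vertexWeight z (P ++ S) < vertexWeight z (Q ++ R) := by
    refine vertexWeight_lt_of_mem (w := x) ?_ (by simp [hx]) (hdis x hx) hxz
    intro a ha haz
    rcases List.mem_append.1 ha with h' | h'
    · exact List.mem_append_left _ (hQ.subset h')
    · exact List.mem_append_left _ (by_contra fun h'' => haz (hcon a h' h''))
  omega

theorem IsAbsorption.length_le [Fintype V] (hirr : ∀ v, ¬ A v v)
    (hdeg : ∀ x y : V, x ≠ z → y ≠ z → x ≠ y → ¬ A x y → ¬ A y x →
      2 * Fintype.card V - 1 ≤ degree A x + degree A y)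
    (hheavy : IsHeaviest A z (P ++ S)) (h : IsBypass A z P S R)
    (hmin : ∀ P' S' R', IsBypass A z P' S' R' → (P' ++ S').Perm (P ++ S) →
      S.length ≤ S'.length)
    (hQ : IsAbsorption A P S Q) {x s : V} (hx : x ∈ R) (hxz : x ≠ z) (hs : s ∈ S) (hsQ : s ∉ Q)
    (hsz : s ≠ z) (hins : Q.IsChain fun a b => ¬ (A a s ∧ A s b)) :
    Q.length ≤ P.length ∧ z ∉ P ++ S ∧
      ((A z s ∧ R.head? = some z) ∨ (A s z ∧ R.getLast? = some z)) := by
  have hxC : x ∉ P ++ S := fun hxC => by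
    rcases List.mem_append.1 hxC with h' | h'
    · exact ((List.nodup_append'.1 h.cyclic'.nodup).2.2) h' hx
    · exact h.disjoint h' hx
  have hsC : s ∈ P ++ S := List.mem_append_right _ hs
  have hxs : x ≠ s := fun e => hxC (e ▸ hsC)
  have nP : P.Nodup := (List.nodup_append'.1 h.cyclic.nodup).1
  have fwd := fun t (ht : t ∈ S) => h.not_shorter hmin hx hxz ht
  have bwd := fun t (ht : t ∈ S) => h.not_shorter_reverse hmin hx hxz ht
  have h1 := hdeg x s hxz hsz hxs (fwd s hs).1 (bwd s hs).1
  have hxP : P.IsChain fun a b => ¬ (A a x ∧ A x b) := by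
    refine not_isChain_insertable ?_
    rintro l₁ a b l₂ rfl
    rw [List.append_assoc] at hheavy hxC
    exact hheavy.not_insert hxC
  set C : Finset V := (P ++ S).toFinset with hCdef
  have hCcard : C.card + Cᶜ.card = Fintype.card V := Finset.card_add_card_compl C
  have hPC : P.toFinset ⊆ C := by
    intro a ha
    simp only [hCdef, List.toFinset_append]
    exact Finset.mem_union_left _ ha
  have hQC : Q.toFinset ⊆ C := by
    intro a ha
    rw [hCdef, List.mem_toFinset]
    exact hQ.subset_append (by simpa using ha)
  have sx : ∑ y ∈ C, arcCount A x y ≤ P.toFinset.card + 1 := by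
    refine le_trans (le_of_eq ?_) (sum_toFinset_arcCount_le x nP hxP)
    symm
    refine Finset.sum_subset hPC fun y hy hyP => ?_
    have hyS : y ∈ S := by
      rw [hCdef, List.mem_toFinset, List.mem_append] at hy
      exact hy.resolve_left (by simpa using hyP)
    exact arcCount_eq_zero (fwd y hyS).1 (bwd y hyS).1
  have sQ := sum_toFinset_arcCount_le s hQ.nodup hins
  have sCQ : ∑ y ∈ C \ Q.toFinset, arcCount A s y + 2 ≤ 2 * (C \ Q.toFinset).card := by
    have hmem : s ∈ C \ Q.toFinset := by simp [hCdef, hs, hsQ]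
    have := Finset.sum_le_sum (s := C \ Q.toFinset)
      (f := fun y => arcCount A s y + (if y = s then 2 else 0)) (g := fun _ => 2) (fun y _ => by
        by_cases hys : y = s
        · subst hys; simp [arcCount_eq_zero (hirr y) (hirr y)]
        · simpa [hys] using arcCount_le_two s y)
    simp only [Finset.sum_add_distrib, Finset.sum_ite_eq', hmem, if_true, Finset.sum_const,
      smul_eq_mul] at this
    omega
  have sC := Finset.sum_sdiff hQC (f := fun y => arcCount A s y)
  have cC := Finset.card_sdiff_add_card_eq_card hQC
  have hPQ : P.toFinset.card ≤ Q.toFinset.card := Finset.card_le_card fun a ha => by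
    simpa using hQ.subset (by simpa using ha)
  rw [List.toFinset_card_of_nodup hQ.nodup, List.toFinset_card_of_nodup nP] at *
  classical
  let T : Prop := z ∉ P ++ S ∧ ((A z s ∧ R.head? = some z) ∨ (A s z ∧ R.getLast? = some z))
  have hboth := h.not_head_last
  have hxCc : x ∈ Cᶜ := by simpa [hCdef] using hxC
  have hout : ∀ y ∈ Cᶜ, arcCount A x y + arcCount A s y + (if y = x then 2 else 0) ≤
      2 + (if y = z then (if T then 1 else 0) else 0) := by
    intro y hy
    have hyC : y ∉ P ++ S := by simpa [hCdef] using hy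
    have f1 := (fwd s hs).2 y hyC
    have b1 := (bwd s hs).2 y hyC
    by_cases hyx : y = x
    · subst hyx
      rw [arcCount_eq_zero (hirr _) (hirr _), arcCount_eq_zero (bwd s hs).1 (fwd s hs).1]
      simp
    rw [if_neg hyx]
    by_cases hyz : y = z
    · subst hyz
      by_cases hT : T
      · simpa [hT] using arcCount_add_arcCount_le_three fun e =>
          hboth ⟨(f1 e.1.1 e.1.2).2, (b1 e.2.2 e.2.1).2⟩
      · simpa [hT] using arcCount_add_arcCount_le_two
          (fun e e' => hT ⟨hyC, Or.inl ⟨e', (f1 e e').2⟩⟩)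
          (fun e e' => hT ⟨hyC, Or.inr ⟨e, (b1 e' e).2⟩⟩)
    · simpa [hyz] using arcCount_add_arcCount_le_two (fun e e' => hyz (f1 e e').1)
        (fun e e' => hyz (b1 e' e).1)
  have sout := Finset.sum_le_sum hout
  have hz : ∑ y ∈ Cᶜ, (if y = z then (if T then 1 else 0) else 0) ≤ (if T then 1 else 0) := by
    rw [Finset.sum_ite_eq']
    split_ifs <;> simp
  simp only [Finset.sum_add_distrib, Finset.sum_ite_eq', hxCc, if_true, Finset.sum_const,
    smul_eq_mul] at sout hz
  have dx := Finset.sum_add_sum_compl C (fun y => arcCount A x y)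
  have ds := Finset.sum_add_sum_compl C (fun y => arcCount A s y)
  rw [degree_eq_sum_arcCount, degree_eq_sum_arcCount] at h1
  by_cases hT : T
  · simp only [hT, if_true] at hz sout
    exact ⟨by omega, hT⟩
  · simp only [hT, if_false] at hz sout
    omega

theorem IsHeaviest.not_isBypass [Fintype V] (hirr : ∀ v, ¬ A v v)
    (hdeg : ∀ x y : V, x ≠ z → y ≠ z → x ≠ y → ¬ A x y → ¬ A y x →
      2 * Fintype.card V - 1 ≤ degree A x + degree A y)
    (hheavy : IsHeaviest A z (P ++ S)) (h : IsBypass A z P S R)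
    (hmin : ∀ P' S' R', IsBypass A z P' S' R' → (P' ++ S').Perm (P ++ S) →
      S.length ≤ S'.length) : False := by
  obtain ⟨x, hx, hxz⟩ := h.exists_ne
  obtain ⟨Q, hQ, hins⟩ := exists_maximal_absorption h
  obtain ⟨s, hs, hsQ, hsz⟩ := hQ.exists_notMem hheavy h
  obtain ⟨hlen, hzC, -⟩ :=
    hQ.length_le hirr hdeg hheavy h hmin hx hxz hs hsQ hsz (hins s hs hsQ)
  have hP := h.ne_nil
  have hS : S ≠ [] := List.ne_nil_of_mem hs
  have hR : R ≠ [] := List.ne_nil_of_mem hx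
  obtain ⟨nP, -, d1, -⟩ := (isCyclicList_append_iff hP hS).1 h.cyclic
  obtain ⟨-, -, -, -, -, j1, j2⟩ := (isCyclicList_append_iff hP hR).1 h.cyclic'
  have hperm : P.Perm Q := (nP.subperm hQ.subset).perm_of_length_le hlen
  have key : ∀ t ∈ S, (A z t ∧ R.head? = some z) ∨ (A t z ∧ R.getLast? = some z) := by
    intro t ht
    have htQ : t ∉ Q := fun h' => d1 (hperm.mem_iff.2 h') ht
    have htz : t ≠ z := fun h' => hzC (h' ▸ List.mem_append_right _ ht)
    exact (hQ.length_le hirr hdeg hheavy h hmin hx hxz ht htQ htz (hins t ht htQ)).2.2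
  have hhead : ¬ (A z (S.head hS) ∧ R.head? = some z) := by
    rintro ⟨e1, e2⟩
    refine hheavy.not_insert_link hP hS hzC ⟨?_, e1⟩
    exact j1 _ (List.getLast_mem_getLast? hP) _ e2
  have hlast : ¬ (A (S.getLast hS) z ∧ R.getLast? = some z) := by
    rintro ⟨e1, e2⟩
    refine (hheavy.perm h.cyclic.append_comm List.perm_append_comm).not_insert_link hS hP
      (fun h' => hzC (List.perm_append_comm.subset h')) ⟨e1, ?_⟩
    exact j2 _ e2 _ (List.head_mem_head? hP)
  have h1 := (key _ (List.head_mem hS)).resolve_left hhead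
  have h2 := (key _ (List.getLast_mem hS)).resolve_right hlast
  exact h.not_head_last ⟨h2.2, h1.2⟩

/-- A heaviest cycle contains all vertices other than `z`. -/
theorem IsHeaviest.mem_of_ne [Fintype V] (hirr : ∀ v, ¬ A v v) (hstrong : IsStrong A)
    (hdeg : ∀ x y : V, x ≠ z → y ≠ z → x ≠ y → ¬ A x y → ¬ A y x →
      2 * Fintype.card V - 1 ≤ degree A x + degree A y)
    {C : List V} (hC : IsHeaviest A z C) {x : V} (hxz : x ≠ z) : x ∈ C := by
  classical
  by_contra hx
  obtain ⟨P₀, S₀, R₀, h₀, hp₀⟩ := exists_isBypass hirr hstrong hdeg hC.cyclic hx hxz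
  have hex : ∃ k P S R, IsBypass A z P S R ∧ (P ++ S).Perm C ∧ S.length = k :=
    ⟨_, P₀, S₀, R₀, h₀, hp₀, rfl⟩
  obtain ⟨P, S, R, h, hp, hk⟩ := Nat.find_spec hex
  refine (hC.perm h.cyclic hp.symm).not_isBypass hirr hdeg h fun P' S' R' h' hp' => ?_
  rw [hk]
  exact Nat.find_min' hex ⟨P', S', R', h', hp'.trans hp, rfl⟩

end Absorption

theorem IsCyclicList.isCycle {V : Type*} {A : V → V → Prop} {C : List V} (h : IsCyclicList A C)
    (h2 : 2 ≤ C.length) : IsCycle A C.get := by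
  refine ⟨h2, List.nodup_iff_injective_get.1 h.nodup, fun i => ?_⟩
  rcases Nat.lt_or_ge (i.val + 1) C.length with hi | hi
  · have := List.isChain_iff_getElem.1 h.chain i.val hi
    simpa [Nat.mod_eq_of_lt hi] using this
  · have hi' : i.val + 1 = C.length := le_antisymm i.isLt hi
    have h1 : C.getLast? = some (C.get i) := by
      rw [List.getLast?_eq_getElem?, ← hi']
      simp
    refine h.closes _ h1 _ ?_
    simp [hi', List.head?_eq_getElem?]

/-- Let `D` be a strong digraph of order `n ≥ 3` and `z` an arbitrary vertex.  If
`d(x) + d(y) ≥ 2n - 1` for every pair of non-adjacent vertices `x, y ∈ V(D) \ {z}`,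
then `D` is Hamiltonian or contains a directed cycle of length `n - 1`. -/
theorem statement6 {V : Type*} [Fintype V] [DecidableEq V] (A : V → V → Prop)
    (hirr : Irreflexive A)
    (n : ℕ) (hn3 : 3 ≤ n) (hcard : Fintype.card V = n)
    (hstrong : IsStrong A)
    (z : V)
    (hdeg : ∀ x y : V, x ≠ z → y ≠ z → x ≠ y → ¬ A x y → ¬ A y x →
      2 * n - 1 ≤ degree A x + degree A y) :
    IsHamiltonian A ∨ ∃ c : Fin (n - 1) → V, IsCycle A c := by
  subst hcard
  obtain ⟨C, hC⟩ := exists_isHeaviest (exists_isCyclicList hirr hstrong (by omega)) z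
  have hsub : Finset.univ.erase z ⊆ C.toFinset := fun x hx => by
    simpa using hC.mem_of_ne hirr hstrong hdeg (Finset.ne_of_mem_erase hx)
  have hle := Finset.card_le_card hsub
  rw [Finset.card_erase_of_mem (Finset.mem_univ z), Finset.card_univ,
    List.toFinset_card_of_nodup hC.cyclic.nodup] at hle
  have hcyc := hC.cyclic.isCycle (hC.cyclic.two_le_length hirr)
  rcases hle.eq_or_lt with h | h
  · right
    rw [h]
    exact ⟨C.get, hcyc⟩
  · left
    have hlen : C.length = Fintype.card V :=
      le_antisymm hC.cyclic.nodup.length_le_card (by omega)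
    unfold IsHamiltonian
    rw [← hlen]
    exact ⟨C.get, hcyc, ((Fintype.bijective_iff_injective_and_card _).2
      ⟨hcyc.2.1, by simpa using hlen⟩).2⟩
end

section
/- Let D be a strong digraph of order n ≥ 2. If n−1 vertices of D have degree at least n and the remaining vertex has degree at least n−1, then D is Hamiltonian. -/
namespace Digraph.Meyniel

variable {V : Type*} {A : V → V → Prop}

open Classical in
/-- The number of arcs between `x` and `y`, in both directions. -/
noncomputable def arcs (A : V → V → Prop) (x y : V) : ℕ :=
  (if A x y then 1 else 0) + (if A y x then 1 else 0)

lemma arcs_le_two (x y : V) : arcs A x y ≤ 2 := by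
  unfold arcs; split_ifs <;> omega

lemma arcs_eq_zero {x y : V} (h₁ : ¬ A x y) (h₂ : ¬ A y x) : arcs A x y = 0 := by
  simp [arcs, h₁, h₂]

lemma degree_eq_sum_arcs [Fintype V] (x : V) : degree A x = ∑ y, arcs A x y := by
  classical
  simp [degree, arcs, Finset.sum_add_distrib, Set.ncard_eq_toFinset_card']

/-- The list `a :: l` enumerates the vertices of a directed cycle. -/
def IsCyclicList (A : V → V → Prop) (a : V) (l : List V) : Prop :=
  (a :: l).Nodup ∧ List.IsChain A (a :: (l ++ [a]))

/-- There is a walk from `a` to `b` with at least one interior vertex, all of them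
outside `S`. -/
def HasBypass (A : V → V → Prop) (S : List V) (a b : V) : Prop :=
  ∃ p : List V, p ≠ [] ∧ (∀ w ∈ p, w ∉ S) ∧ List.IsChain A (a :: (p ++ [b]))

lemma HasBypass.of_mem_iff {S T : List V} {a b : V} (h : HasBypass A S a b)
    (hST : ∀ w, w ∈ S ↔ w ∈ T) : HasBypass A T a b := by
  simpa only [HasBypass, hST] using h

/-- A walk contains a path with the same ends. -/
lemma exists_nodup_of_isChain {b : V} (p : List V) : ∀ {a : V}, p ≠ [] →
    List.IsChain A (a :: (p ++ [b])) →
    ∃ p' : List V, p' ≠ [] ∧ p' ⊆ p ∧ p'.Nodup ∧ List.IsChain A (a :: (p' ++ [b])) := by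
  induction p with
  | nil => intro a h; exact absurd rfl h
  | cons c t ih =>
    intro a _ hc
    rcases eq_or_ne t [] with rfl | ht
    · exact ⟨[c], by simp, by simp, by simp, hc⟩
    · rw [List.cons_append, List.isChain_cons_cons] at hc
      obtain ⟨t', -, hsub, hnd, hch⟩ := ih ht hc.2
      by_cases hct : c ∈ t'
      · obtain ⟨s₁, s₂, rfl⟩ := List.append_of_mem hct
        refine ⟨c :: s₂, by simp, ?_, hnd.of_append_right, ?_⟩
        · intro w hw
          exact List.mem_cons_of_mem _ (hsub (List.mem_append_right _ hw))
        · have := (List.isChain_split (l₁ := c :: s₁) (c := c) (l₂ := s₂ ++ [b])).1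
            (by simpa using hch)
          simpa [hc.1] using this.2
      · refine ⟨c :: t', by simp, ?_, List.nodup_cons.2 ⟨hct, hnd⟩, by simpa [hc.1] using hch⟩
        exact List.cons_subset_cons _ hsub

/-- A vertex sending and receiving many arcs to a path can be inserted into it. -/
lemma exists_insertion {a x : V} (m : List V) : ∀ {b : V},
    List.IsChain A (b :: (m ++ [a])) →
    m.length + 3 < ((b :: (m ++ [a])).map (arcs A x)).sum →
    ∃ m₁ m₂, m = m₁ ++ m₂ ∧ List.IsChain A (b :: (m₁ ++ x :: (m₂ ++ [a]))) := by
  classical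
  suffices H : ∀ {b : V}, List.IsChain A (b :: (m ++ [a])) →
      m.length + 2 + (if A x b then 1 else 0) < ((b :: (m ++ [a])).map (arcs A x)).sum →
      ∃ m₁ m₂, m = m₁ ++ m₂ ∧ List.IsChain A (b :: (m₁ ++ x :: (m₂ ++ [a]))) by
    intro b hb h
    refine H hb ?_
    split_ifs <;> omega
  induction m with
  | nil =>
    intro b _ h
    refine ⟨[], [], rfl, ?_⟩
    simp only [List.nil_append, List.map_cons, List.map_nil, List.sum_cons, List.sum_nil,
      List.length_nil, arcs] at h
    have : A b x ∧ A x a := by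
      by_contra hcon
      split_ifs at h <;> first | omega | tauto
    simpa using this
  | cons c t ih =>
    intro b hb h
    rw [List.cons_append, List.isChain_cons_cons] at hb
    by_cases hbc : A b x ∧ A x c
    · exact ⟨[], c :: t, rfl, by simpa [hbc] using hb.2⟩
    · obtain ⟨m₁, m₂, rfl, hch⟩ := ih hb.2 (by
        rw [List.cons_append, List.map_cons, List.sum_cons] at h
        generalize ((c :: (t ++ [a])).map (arcs A x)).sum = s at h ⊢
        simp only [List.length_cons, arcs] at h
        split_ifs at h ⊢ <;> first | omega | tauto)
      exact ⟨c :: m₁, m₂, rfl, by simpa [hb.1] using hch⟩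

lemma IsCyclicList.rotate {a b : V} {s t : List V} (h : IsCyclicList A a (s ++ b :: t)) :
    IsCyclicList A b (t ++ a :: s) := by
  obtain ⟨hnd, hch⟩ := h
  constructor
  · have : (b :: (t ++ a :: s)).Perm (a :: (s ++ b :: t)) := by
      have := (List.perm_append_comm (l₁ := b :: t) (l₂ := a :: s))
      simpa using this
    exact this.nodup_iff.2 hnd
  · have h1 := (List.isChain_split (l₁ := a :: s) (c := b) (l₂ := t ++ [a])).1 (by simpa using hch)
    have h2 := (List.isChain_split (R := A) (l₁ := b :: t) (c := a) (l₂ := s ++ [b])).2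
      ⟨by simpa using h1.2, by simpa using h1.1⟩
    simpa using h2

lemma IsCyclicList.exists_rotation {a x : V} {l : List V} (h : IsCyclicList A a l)
    (hx : x ∈ a :: l) :
    ∃ l', IsCyclicList A x l' ∧ l'.length = l.length ∧ ∀ w, w ∈ x :: l' ↔ w ∈ a :: l := by
  rcases List.mem_cons.1 hx with rfl | hx
  · exact ⟨l, h, rfl, fun _ => Iff.rfl⟩
  · obtain ⟨s, t, rfl⟩ := List.append_of_mem hx
    refine ⟨t ++ a :: s, h.rotate, by simp; omega, fun w => ?_⟩
    simp only [List.mem_cons, List.mem_append]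
    tauto

/-- If `u` has no bypass from `a` nor to `b`, then a vertex `v` on a bypass from `a` to `b`
is nonadjacent to `u`, and outside `S` they have few common neighbours. -/
lemma arcs_bounds_of_not_hasBypass {S : List V} {a b u v : V} {q : List V} (hv : v ∉ S)
    (hq : ∀ w ∈ q, w ∉ S) (hav : A a v) (hch : List.IsChain A (v :: (q ++ [b])))
    (h₁ : ¬ HasBypass A S a u) (h₂ : ¬ HasBypass A S u b) :
    ¬ A u v ∧ ¬ A v u ∧ ∀ w, w ∉ S → arcs A u w + arcs A v w ≤ 2 := by
  refine ⟨fun h => h₂ ⟨v :: q, by simp, by simpa [hv] using hq, by simpa [h] using hch⟩,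
    fun h => h₁ ⟨[v], by simp, by simpa using hv, by simp [h, hav]⟩, fun w hw => ?_⟩
  have k₁ : ¬ (A u w ∧ A w v) := fun h =>
    h₂ ⟨w :: v :: q, by simp, by simpa [hv, hw] using hq, by simpa [h] using hch⟩
  have k₂ : ¬ (A v w ∧ A w u) := fun h =>
    h₁ ⟨[v, w], by simp, by simp [hv, hw], by simp [h, hav]⟩
  unfold arcs
  split_ifs <;> first | omega | tauto

lemma degree_add_degree_le [Fintype V] [DecidableEq V] (hirr : ∀ x, ¬ A x x) {u v : V}
    {W : Finset V} (huv : u ≠ v)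
    (hu : u ∉ W) (hv : v ∉ W) (h₁ : ¬ A u v) (h₂ : ¬ A v u)
    (hW : ∑ w ∈ W, (arcs A u w + arcs A v w) ≤ 2 * W.card + 2)
    (hout : ∀ w ∉ W, arcs A u w + arcs A v w ≤ 2) :
    degree A u + degree A v + 2 ≤ 2 * Fintype.card V := by
  rw [degree_eq_sum_arcs, degree_eq_sum_arcs, ← Finset.sum_add_distrib,
    ← Finset.sum_add_sum_compl W]
  have hsub : {u, v} ⊆ Wᶜ := by
    intro w hw
    simp only [Finset.mem_insert, Finset.mem_singleton] at hw
    rcases hw with rfl | rfl <;> simpa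
  have hzero : ∑ w ∈ ({u, v} : Finset V), (arcs A u w + arcs A v w) = 0 := by
    rw [Finset.sum_pair huv]
    simp [arcs, hirr, h₁, h₂]
  have hrest : ∑ w ∈ Wᶜ \ {u, v}, (arcs A u w + arcs A v w) ≤ (Wᶜ \ {u, v}).card * 2 :=
    Finset.sum_le_card_nsmul _ _ _ fun w hw => hout w (by
      simp only [Finset.mem_sdiff, Finset.mem_compl] at hw
      exact hw.1)
  have hcard : (Wᶜ \ {u, v}).card + 2 = Wᶜ.card := by
    rw [← Finset.card_sdiff_add_card_eq_card hsub, Finset.card_pair huv]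
  have := Finset.card_add_card_compl W
  rw [← Finset.sum_sdiff hsub, hzero]
  omega

lemma exists_isCyclicList (hirr : ∀ x, ¬ A x x) (hstrong : IsStrong A) {x y : V}
    (hxy : x ≠ y) : ∃ a l, IsCyclicList A a l := by
  obtain h | ⟨s, hs, hsx⟩ := (hstrong x y).cases_head
  · exact absurd h hxy
  have hwalk : ∃ p : List V, p ≠ [] ∧ List.IsChain A (x :: (p ++ [x])) := by
    have : ∃ p : List V, List.IsChain A (s :: (p ++ [x])) := by
      have h := hstrong s x
      have hsne : s ≠ x := by rintro rfl; exact hirr _ hs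
      clear hs hsx
      induction h using Relation.ReflTransGen.head_induction_on with
      | refl => exact absurd rfl hsne
      | @head c d h₁ _ ih =>
        by_cases hd : d = x
        · subst hd; exact ⟨[], by simpa using h₁⟩
        · obtain ⟨p, hp⟩ := ih hd
          exact ⟨d :: p, by simpa [h₁] using hp⟩
    obtain ⟨p, hp⟩ := this
    exact ⟨s :: p, by simp, by simpa [hs] using hp⟩
  obtain ⟨p, hp, hch⟩ := hwalk
  obtain ⟨p, -, -, hnd, hch⟩ := exists_nodup_of_isChain p hp hch
  by_cases hx : x ∈ p
  · obtain ⟨s, t, rfl⟩ := List.append_of_mem hx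
    have := (List.isChain_split (l₁ := x :: s) (c := x) (l₂ := t ++ [x])).1 (by simpa using hch)
    exact ⟨x, t, hnd.of_append_right, this.2⟩
  · exact ⟨x, p, List.nodup_cons.2 ⟨hx, hnd⟩, hch⟩

lemma exists_arc_leaving {S : Set V} {x y : V} (h : Relation.ReflTransGen A x y)
    (hx : x ∈ S) (hy : y ∉ S) : ∃ a ∈ S, ∃ b ∉ S, A a b := by
  induction h with
  | refl => exact absurd hx hy
  | @tail b c _ hbc ih =>
    by_cases hb : b ∈ S
    · exact ⟨b, hb, c, hy, hbc⟩
    · exact ih hb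

lemma exists_isChain_to {S : List V} {v x : V} (h : Relation.ReflTransGen A v x)
    (hx : x ∈ S) (hv : v ∉ S) :
    ∃ b ∈ S, ∃ q : List V, (∀ w ∈ q, w ∉ S) ∧ List.IsChain A (v :: (q ++ [b])) := by
  induction h using Relation.ReflTransGen.head_induction_on with
  | refl => exact absurd hx hv
  | @head c d h₁ _ ih =>
    by_cases hd : d ∈ S
    · exact ⟨d, hd, [], by simp, by simpa using h₁⟩
    · obtain ⟨b, hb, q, hq, hch⟩ := ih hd
      exact ⟨b, hb, d :: q, by simpa [hd] using hq, by simpa [h₁] using hch⟩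

/-- Under the degree-sum condition, a longest cycle has no bypass between two of its
vertices; the induction is on the length `k` of the bypassed segment. -/
lemma IsCyclicList.not_hasBypass [Fintype V] [DecidableEq V] (hirr : ∀ x, ¬ A x x) (k : ℕ)
    {M : ℕ} (hmax : ∀ a l, IsCyclicList A a l → l.length ≤ M)
    (hdeg : ∀ u v, u ≠ v → ¬ A u v → ¬ A v u →
      2 * Fintype.card V ≤ degree A u + degree A v + 1) :
    ∀ {a b : V} {Q rest : List V}, Q.length = k → IsCyclicList A a (Q ++ b :: rest) →
      (Q ++ b :: rest).length = M → ¬ HasBypass A (a :: (Q ++ b :: rest)) a b := by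
  induction k using Nat.strong_induction_on with
  | _ k ih =>
  intro a b Q rest hk hcyc hM hby
  set S := a :: (Q ++ b :: rest) with hS
  obtain ⟨hnd, hch⟩ := id hcyc
  have hleft : ∀ u ∈ Q, ¬ HasBypass A S a u := by
    intro u hu hbu
    obtain ⟨Q₁, Q₂, rfl⟩ := List.append_of_mem hu
    have e : Q₁ ++ u :: Q₂ ++ b :: rest = Q₁ ++ u :: (Q₂ ++ b :: rest) := by simp
    rw [e] at hcyc hM hS
    exact ih Q₁.length (by simp at hk; omega) rfl hcyc hM (hS ▸ hbu)
  have hright : ∀ u ∈ Q, ¬ HasBypass A S u b := by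
    intro u hu hbu
    obtain ⟨Q₁, Q₂, rfl⟩ := List.append_of_mem hu
    have e : Q₁ ++ u :: Q₂ ++ b :: rest = Q₁ ++ u :: (Q₂ ++ b :: rest) := by simp
    rw [e] at hcyc hM
    have hcyc' := hcyc.rotate
    have e' : Q₂ ++ b :: rest ++ a :: Q₁ = Q₂ ++ b :: (rest ++ a :: Q₁) := by simp
    rw [e'] at hcyc'
    refine ih Q₂.length (by simp at hk; omega) rfl hcyc'
      (by simp at hM ⊢; omega) (hbu.of_mem_iff fun w => ?_)
    simp only [hS, List.mem_cons, List.mem_append]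
    tauto
  obtain ⟨p, hp, hpS, hpch⟩ := hby
  obtain ⟨p, hp, hpsub, hpnd, hpch⟩ := exists_nodup_of_isChain p hp hpch
  replace hpS : ∀ w ∈ p, w ∉ S := fun w hw => hpS w (hpsub hw)
  clear hpsub
  have hsplit := (List.isChain_split (R := A) (l₁ := a :: Q) (c := b) (l₂ := rest ++ [a])).1
    (by simpa using hch)
  -- a longest path from `b` to `a` on vertices of the cycle, containing `rest`
  obtain ⟨m, ⟨hmnd, hmS, hmrest, hmch⟩, hmmax⟩ : ∃ m : List V,
      ((b :: (m ++ [a])).Nodup ∧ (∀ w ∈ m, w ∈ S) ∧ (∀ w ∈ rest, w ∈ m) ∧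
        List.IsChain A (b :: (m ++ [a]))) ∧
      ∀ m' : List V, ((b :: (m' ++ [a])).Nodup ∧ (∀ w ∈ m', w ∈ S) ∧ (∀ w ∈ rest, w ∈ m') ∧
        List.IsChain A (b :: (m' ++ [a]))) → m'.length ≤ m.length := by
    let P : ℕ → Prop := fun j => ∃ m : List V, m.length = j ∧
      (b :: (m ++ [a])).Nodup ∧ (∀ w ∈ m, w ∈ S) ∧ (∀ w ∈ rest, w ∈ m) ∧
        List.IsChain A (b :: (m ++ [a]))
    have hbound : ∀ j, P j → j ≤ Fintype.card V := by
      rintro j ⟨m, rfl, h, -⟩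
      have := h.length_le_card
      simp at this; omega
    have hP : P rest.length := by
      refine ⟨rest, rfl, ?_, ?_, fun _ h => h, by simpa using hsplit.2⟩
      · simp only [List.nodup_cons, List.nodup_append, List.mem_append, List.mem_cons] at hnd ⊢
        grind
      · intro w hw; simp [hS, hw]
    classical
    obtain ⟨m, hm, hm'⟩ := Nat.findGreatest_spec (hbound _ hP) hP
    exact ⟨m, hm', fun m' h' => hm ▸ Nat.le_findGreatest (hbound _ ⟨m', rfl, h'⟩) ⟨m', rfl, h'⟩⟩
  have hcycm : IsCyclicList A a (p ++ b :: m) := by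
    constructor
    · have haS : a ∈ S := by simp [hS]
      have hbS : b ∈ S := by simp [hS]
      simp only [List.nodup_cons, List.nodup_append, List.mem_append, List.mem_cons] at hmnd ⊢
      grind
    · have := (List.isChain_split (R := A) (l₁ := a :: p) (c := b) (l₂ := m ++ [a])).2
        ⟨by simpa using hpch, hmch⟩
      simpa using this
  have hlen := hmax _ _ hcycm
  obtain ⟨u, huS, hum⟩ : ∃ u ∈ S, u ∉ b :: (m ++ [a]) := by
    by_contra! hcon
    have h₁ := (hnd.subperm hcon).length_le
    have := List.length_pos_iff.2 hp
    simp at h₁ hlen hM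
    omega
  have hQ : ∀ w ∈ S, w ∉ b :: (m ++ [a]) → w ∈ Q := by
    intro w hw hwm
    simp only [hS, List.mem_cons, List.mem_append, List.not_mem_nil, or_false] at hw hwm
    have := hmrest w
    tauto
  obtain ⟨v, q, rfl⟩ := List.exists_cons_of_ne_nil hp
  have hvS : v ∉ S := hpS v (by simp)
  rw [List.cons_append, List.isChain_cons_cons] at hpch
  have hq : ∀ w ∈ q, w ∉ S := fun w hw => hpS w (by simp [hw])
  have key : ∀ w ∈ Q, ¬ A w v ∧ ¬ A v w ∧ ∀ w', w' ∉ S → arcs A w w' + arcs A v w' ≤ 2 :=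
    fun w hw => arcs_bounds_of_not_hasBypass hvS hq hpch.1 hpch.2 (hleft w hw) (hright w hw)
  have huQ := hQ u huS hum
  have huv : u ≠ v := by rintro rfl; exact hvS huS
  have hWS : ∀ w ∈ b :: (m ++ [a]), w ∈ S := by
    intro w hw
    simp only [List.mem_cons, List.mem_append, List.not_mem_nil, or_false] at hw
    rcases hw with rfl | hw | rfl
    · simp [hS]
    · exact hmS w hw
    · simp [hS]
  have hsumu : ((b :: (m ++ [a])).map (arcs A u)).sum ≤ m.length + 3 := by
    by_contra! hcon
    obtain ⟨m₁, m₂, rfl, hins⟩ := exists_insertion m hmch hcon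
    have := hmmax (m₁ ++ u :: m₂) ⟨?_, ?_, ?_, by simpa using hins⟩
    · simp at this
    · have := (List.nodup_middle (l₁ := b :: m₁) (a := u) (l₂ := m₂ ++ [a])).2
        (List.nodup_cons.2 ⟨by simpa using hum, by simpa using hmnd⟩)
      simpa using this
    · intro w hw
      simp only [List.mem_cons, List.mem_append] at hw hmS
      rcases hw with hw | rfl | hw
      · exact hmS w (.inl hw)
      · exact huS
      · exact hmS w (.inr hw)
    · intro w hw
      have := hmrest w hw
      simp only [List.mem_cons, List.mem_append] at this ⊢
      tauto
  have hsumv : ((b :: (rest ++ [a])).map (arcs A v)).sum ≤ rest.length + 3 := by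
    by_contra! hcon
    obtain ⟨r₁, r₂, rfl, hins⟩ := exists_insertion rest hsplit.2 hcon
    have := hmax a (Q ++ b :: (r₁ ++ v :: r₂)) ⟨?_, ?_⟩
    · simp at this hM; omega
    · have := (List.nodup_middle (l₁ := a :: (Q ++ b :: r₁)) (a := v) (l₂ := r₂)).2
        (List.nodup_cons.2 ⟨by simpa [hS] using hvS, by simpa using hnd⟩)
      simpa using this
    · have := (List.isChain_split (R := A) (l₁ := a :: Q) (c := b)
        (l₂ := r₁ ++ v :: (r₂ ++ [a]))).2 ⟨hsplit.1, hins⟩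
      simpa using this
  have hrnd : (b :: (rest ++ [a])).Nodup := by
    simp only [List.nodup_cons, List.nodup_append, List.mem_append, List.mem_cons] at hnd ⊢
    grind
  replace hsumu : ∑ w ∈ (b :: (m ++ [a])).toFinset, arcs A u w ≤ m.length + 3 :=
    (List.sum_toFinset (arcs A u) hmnd).trans_le hsumu
  replace hsumv : ∑ w ∈ (b :: (rest ++ [a])).toFinset, arcs A v w ≤ rest.length + 3 :=
    (List.sum_toFinset (arcs A v) hrnd).trans_le hsumv
  have hsubset : (b :: (rest ++ [a])).toFinset ⊆ (b :: (m ++ [a])).toFinset := by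
    intro w hw
    simp only [List.mem_toFinset, List.mem_cons, List.mem_append] at hw ⊢
    have := hmrest w
    tauto
  have hcardm := List.toFinset_card_of_nodup hmnd
  have hcardr := List.toFinset_card_of_nodup hrnd
  have hle := Finset.card_le_card hsubset
  have hext : ∑ w ∈ (b :: (rest ++ [a])).toFinset, arcs A v w
      = ∑ w ∈ (b :: (m ++ [a])).toFinset, arcs A v w := by
    refine Finset.sum_subset hsubset fun w hw hw' => ?_
    rw [List.mem_toFinset] at hw hw'
    have hwQ : w ∈ Q := by
      have := hWS w hw
      simp only [hS, List.mem_cons, List.mem_append, List.not_mem_nil, or_false] at this hw'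
      tauto
    exact arcs_eq_zero (key w hwQ).2.1 (key w hwQ).1
  have hvm : v ∉ b :: (m ++ [a]) := fun h => hvS (hWS v h)
  have := degree_add_degree_le hirr (W := (b :: (m ++ [a])).toFinset) huv
    (by simpa only [List.mem_toFinset] using hum) (by simpa only [List.mem_toFinset] using hvm)
    (key u huQ).1 (key u huQ).2.1
    (by
      rw [Finset.sum_add_distrib]
      simp only [List.length_cons, List.length_append, List.length_nil] at hcardm hcardr
      omega)
    (by
      intro w hw
      rw [List.mem_toFinset] at hw
      by_cases hwS : w ∈ S
      · have hwQ := hQ w hwS hw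
        rw [arcs_eq_zero (key w hwQ).2.1 (key w hwQ).1]
        exact arcs_le_two u w
      · exact (key u huQ).2.2 w hwS)
  have := hdeg u v huv (key u huQ).1 (key u huQ).2.1
  omega

lemma IsCyclicList.isHamiltonian [Fintype V] (hirr : ∀ x, ¬ A x x) {a : V} {l : List V}
    (h : IsCyclicList A a l) (hall : ∀ w, w ∈ a :: l) : IsHamiltonian A := by
  classical
  have hlen : (a :: l).length = Fintype.card V := by
    rw [← List.toFinset_card_of_nodup h.1, ← Finset.card_univ]
    congr 1
    ext w
    simpa using hall w
  have hl : l ≠ [] := by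
    rintro rfl
    exact hirr a (by simpa using h.2)
  have hpos := List.length_pos_iff.2 hl
  rw [IsHamiltonian, ← hlen]
  refine ⟨fun i => (a :: l)[i.val], ⟨by simp; omega, ?_, ?_⟩, ?_⟩
  · intro i j hij
    exact Fin.ext ((h.1.getElem_inj_iff).1 hij)
  · rintro ⟨i, hi⟩
    have hch := List.isChain_iff_getElem.1 h.2 i (by simp at hi ⊢; omega)
    simp only [← List.cons_append] at hch
    rw [List.getElem_append_left hi] at hch
    rcases Nat.lt_or_ge (i + 1) (a :: l).length with h' | h'
    · rw [List.getElem_append_left h'] at hch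
      simpa only [Nat.mod_eq_of_lt h'] using hch
    · have e : i + 1 = (a :: l).length := by omega
      simp only [e, Nat.mod_self]
      rw [List.getElem_append_right h'] at hch
      simpa using hch
  · intro w
    obtain ⟨i, hi, rfl⟩ := List.getElem_of_mem (hall w)
    exact ⟨⟨i, hi⟩, rfl⟩

/-- **Meyniel's theorem**: a strong digraph of order `n ≥ 2` in which any two nonadjacent
vertices have degree sum at least `2n - 1` is Hamiltonian. -/
theorem isHamiltonian_of_nonadjacent_degree_sum [Fintype V] [DecidableEq V] [Nontrivial V]
    (hirr : ∀ x, ¬ A x x) (hstrong : IsStrong A)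
    (hdeg : ∀ u v, u ≠ v → ¬ A u v → ¬ A v u →
      2 * Fintype.card V ≤ degree A u + degree A v + 1) :
    IsHamiltonian A := by
  classical
  obtain ⟨x₀, y₀, hxy⟩ := exists_pair_ne V
  obtain ⟨a₀, l₀, h₀⟩ := exists_isCyclicList hirr hstrong hxy
  have hbound : ∀ a l, IsCyclicList A a l → l.length ≤ Fintype.card V := by
    intro a l h
    have := h.1.length_le_card
    simp at this; omega
  let P : ℕ → Prop := fun j => ∃ a l, IsCyclicList A a l ∧ l.length = j
  have hP₀ : P l₀.length := ⟨a₀, l₀, h₀, rfl⟩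
  obtain ⟨a, l, hcyc, hM⟩ : P (Nat.findGreatest P (Fintype.card V)) :=
    Nat.findGreatest_spec (hbound _ _ h₀) hP₀
  have hmax : ∀ a' l', IsCyclicList A a' l' → l'.length ≤ l.length := fun a' l' h' =>
    hM ▸ Nat.le_findGreatest (hbound _ _ h') ⟨a', l', h', rfl⟩
  clear hM
  by_cases hall : ∀ w, w ∈ a :: l
  · exact hcyc.isHamiltonian hirr hall
  push Not at hall
  obtain ⟨r, hr⟩ := hall
  have hno : ∀ x ∈ a :: l, ∀ y ∈ a :: l, x ≠ y → ¬ HasBypass A (a :: l) x y := by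
    intro x hx y hy hne hby
    obtain ⟨l', hcyc', hlen, hmem⟩ := hcyc.exists_rotation hx
    have hy' : y ∈ l' := by
      rcases List.mem_cons.1 ((hmem y).2 hy) with h | h
      · exact absurd h.symm hne
      · exact h
    obtain ⟨Q, rest, rfl⟩ := List.append_of_mem hy'
    exact IsCyclicList.not_hasBypass hirr _ hmax hdeg rfl hcyc' hlen
      (hby.of_mem_iff fun w => (hmem w).symm)
  obtain ⟨x, hx, v, hv, hxv⟩ := exists_arc_leaving (S := {w | w ∈ a :: l}) (hstrong a r)
    (by simp) hr
  obtain ⟨b, hb, q, hq, hch⟩ := exists_isChain_to (hstrong v x) hx hv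
  obtain rfl : x = b := by
    by_contra hne
    exact hno x hx b hb hne ⟨v :: q, by simp, List.forall_mem_cons.2 ⟨hv, hq⟩,
      by simpa [hxv] using hch⟩
  have key : ∀ u ∈ a :: l, u ≠ x →
      ¬ A u v ∧ ¬ A v u ∧ ∀ w, w ∉ a :: l → arcs A u w + arcs A v w ≤ 2 := fun u hu hne =>
    arcs_bounds_of_not_hasBypass hv hq hxv hch (hno x hx u hu hne.symm) (hno u hu x hx hne)
  obtain ⟨y, hy, hyx⟩ : ∃ y ∈ a :: l, y ≠ x := by
    obtain ⟨l', hcyc', -, hmem⟩ := hcyc.exists_rotation hx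
    cases l' with
    | nil => exact absurd (by simpa using hcyc'.2) (hirr x)
    | cons c t =>
      refine ⟨c, (hmem c).1 (by simp), ?_⟩
      rintro rfl
      simpa using hcyc'.1
  have hyv : y ≠ v := by rintro rfl; exact hv hy
  have hvx : v ≠ x := by rintro rfl; exact hv hx
  obtain ⟨h₁, h₂, h₃⟩ := key y hy hyx
  have := degree_add_degree_le hirr (W := {x}) hyv (by simpa) (by simpa) h₁ h₂
    (by
      have := arcs_le_two (A := A) y x
      have := arcs_le_two (A := A) v x
      simp only [Finset.sum_singleton, Finset.card_singleton]
      omega)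
    (by
      intro w hw
      rw [Finset.mem_singleton] at hw
      by_cases hwS : w ∈ a :: l
      · rw [arcs_eq_zero (key w hwS hw).2.1 (key w hwS hw).1]
        exact arcs_le_two y w
      · exact h₃ w hwS)
  have := hdeg y v hyv h₁ h₂
  omega

end Digraph.Meyniel

/-- Goldberg, Levitskaya, Satanovskyi: let `D` be a strong digraph of order `n ≥ 2`.
If `n - 1` vertices of `D` have degree at least `n` and the remaining vertex has
degree at least `n - 1`, then `D` is Hamiltonian. -/
theorem statement9 {V : Type*} [Fintype V] [DecidableEq V] (A : V → V → Prop)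
    (hirr : Irreflexive A)
    (n : ℕ) (hn2 : 2 ≤ n) (hcard : Fintype.card V = n)
    (hstrong : IsStrong A)
    (z : V)
    (hdeg : ∀ v : V, v ≠ z → n ≤ degree A v)
    (hdegz : n - 1 ≤ degree A z) :
    IsHamiltonian A := by
  subst hcard
  have : Nontrivial V := Fintype.one_lt_card_iff_nontrivial.1 hn2
  refine Digraph.Meyniel.isHamiltonian_of_nonadjacent_degree_sum hirr hstrong fun u v huv _ _ => ?_
  by_cases hu : u = z
  · have := hdeg v (hu ▸ huv.symm)
    subst hu
    omega
  · have := hdeg u hu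
    by_cases hv : v = z
    · subst hv
      omega
    · have := hdeg v hv
      omega
end

section
/- Let D be a strong digraph of order n ≥ 2. If d(x) + d(y) ≥ 2n−1 for every pair of non-adjacent vertices x and y in D, then D is Hamiltonian. -/
namespace Meyniel

open Finset

variable {V : Type*}

/-- A list of distinct vertices traversed by a directed cycle. -/
def IsCycleList (A : V → V → Prop) (l : List V) : Prop :=
  l ≠ [] ∧ l.Nodup ∧ l.IsChain A ∧ ∀ a ∈ l.getLast?, ∀ b ∈ l.head?, A a b

/-- A directed path from `u` to `v` through at least one further vertex,
all of whose internal vertices lie outside `K`. -/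
def Bypass (A : V → V → Prop) (K : Set V) (u v : V) : Prop :=
  ∃ x x', x ∉ K ∧ A u x ∧ ReachIn A Kᶜ x x' ∧ A x' v

/-- A simple directed path from `u` to `v`, given by its list of vertices. -/
def IsPathList (A : V → V → Prop) (u v : V) (l : List V) : Prop :=
  l.Nodup ∧ l.IsChain A ∧ l.head? = some u ∧ l.getLast? = some v

theorem IsCycleList.rotate {A : V → V → Prop} {l₁ l₂ : List V}
    (h : IsCycleList A (l₁ ++ l₂)) : IsCycleList A (l₂ ++ l₁) := by
  rcases eq_or_ne l₁ [] with rfl | h₁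
  · simpa using h
  rcases eq_or_ne l₂ [] with rfl | h₂
  · simpa using h
  obtain ⟨-, hn, hc, hl⟩ := h
  rw [List.isChain_append] at hc
  refine ⟨by simp [h₁], (List.perm_append_comm.nodup_iff).1 hn, ?_, ?_⟩
  · rw [List.isChain_append]
    refine ⟨hc.2.1, hc.1, fun a ha b hb => hl a ?_ b ?_⟩
    · rw [List.getLast?_append_of_ne_nil _ h₂]; exact ha
    · rw [List.head?_append_of_ne_nil _ h₁]; exact hb
  · rw [List.getLast?_append_of_ne_nil _ h₁, List.head?_append_of_ne_nil _ h₂]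
    exact hc.2.2

theorem IsPathList.ne_nil {A : V → V → Prop} {u v : V} {l : List V}
    (h : IsPathList A u v l) : l ≠ [] := by
  rintro rfl
  simpa using h.2.2.1

theorem IsPathList.isCycleList_append {A : V → V → Prop} {u v x y : V} {l m : List V}
    (hl : IsPathList A v u l) (hm : IsPathList A x y m) (hd : l.Disjoint m)
    (hux : A u x) (hyv : A y v) : IsCycleList A (l ++ m) := by
  refine ⟨by simp [hl.ne_nil], hl.1.append hm.1 hd, ?_, ?_⟩
  · rw [List.isChain_append]
    refine ⟨hl.2.1, hm.2.1, ?_⟩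
    rw [hl.2.2.2, hm.2.2.1]
    simpa using hux
  · rw [List.getLast?_append_of_ne_nil _ hm.ne_nil, List.head?_append_of_ne_nil _ hl.ne_nil,
      hm.2.2.2, hl.2.2.1]
    simpa using hyv

theorem exists_isPathList_of_reachIn {A : V → V → Prop} {S : Set V} {x y : V} (hx : x ∈ S)
    (h : ReachIn A S x y) : ∃ l, IsPathList A x y l ∧ ∀ z ∈ l, z ∈ S := by
  revert hx
  refine Relation.ReflTransGen.head_induction_on
    (motive := fun a _ => a ∈ S → ∃ l, IsPathList A a y l ∧ ∀ z ∈ l, z ∈ S) h ?_ ?_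
  · intro hy
    exact ⟨[y], by simp [IsPathList], by simpa using hy⟩
  · rintro a b ⟨ha, hb, hab⟩ - ih -
    obtain ⟨l, hl, hlS⟩ := ih hb
    by_cases hal : a ∈ l
    · obtain ⟨s, t, rfl⟩ := List.append_of_mem hal
      obtain ⟨hn, hc, -, ht⟩ := hl
      refine ⟨a :: t, ⟨hn.of_append_right, (List.isChain_append.1 hc).2.1, rfl, ?_⟩,
        fun z hz => hlS z (by simp only [List.mem_append]; exact Or.inr hz)⟩
      rwa [List.getLast?_append_of_ne_nil _ (by simp)] at ht
    · obtain ⟨hn, hc, hh, ht⟩ := hl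
      refine ⟨a :: l, ⟨List.nodup_cons.2 ⟨hal, hn⟩, ?_, rfl, ?_⟩, ?_⟩
      · rw [List.isChain_cons]
        exact ⟨by rw [hh]; simpa using hab, hc⟩
      · rw [List.getLast?_cons, ht]; rfl
      · simpa [ha] using hlS

theorem exists_arc_leaving {A : V → V → Prop} {S : Set V} {x y : V}
    (h : Relation.ReflTransGen A x y) (hx : x ∈ S) (hy : y ∉ S) :
    ∃ a ∈ S, ∃ b ∉ S, A a b := by
  induction h with
  | refl => exact absurd hx hy
  | @tail b c _ hbc ih =>
    by_cases hb : b ∈ S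
    · exact ⟨b, hb, c, hy, hbc⟩
    · exact ih hb

theorem exists_reachIn_compl_arc {A : V → V → Prop} {K : Set V} {x y : V}
    (h : Relation.ReflTransGen A x y) (hx : x ∉ K) (hy : y ∈ K) :
    ∃ x', ReachIn A Kᶜ x x' ∧ ∃ w ∈ K, A x' w := by
  revert hx
  refine Relation.ReflTransGen.head_induction_on
    (motive := fun a _ => a ∉ K → ∃ x', ReachIn A Kᶜ a x' ∧ ∃ w ∈ K, A x' w) h ?_ ?_
  · exact fun h => absurd hy h
  · intro a b hab _ ih ha
    by_cases hb : b ∈ K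
    · exact ⟨a, Relation.ReflTransGen.refl, b, hb, hab⟩
    · obtain ⟨x', h1, h2⟩ := ih hb
      exact ⟨x', Relation.ReflTransGen.head ⟨ha, hb, hab⟩ h1, h2⟩

theorem exists_isCycleList {A : V → V → Prop} (hs : IsStrong A) {a b : V} (hab : a ≠ b) :
    ∃ l, IsCycleList A l := by
  obtain ⟨u, -, c, -, huc⟩ := exists_arc_leaving (S := {a}) (hs a b) rfl hab.symm
  obtain ⟨l, hl, -⟩ := exists_isPathList_of_reachIn (S := Set.univ) (Set.mem_univ c)
    (show ReachIn A Set.univ c u by simpa [ReachIn] using hs c u)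
  refine ⟨l, hl.ne_nil, hl.1, hl.2.1, ?_⟩
  rw [hl.2.2.1, hl.2.2.2]
  simpa using huc

theorem IsCycleList.two_le_length {A : V → V → Prop} (hirr : ∀ x, ¬ A x x) {l : List V}
    (h : IsCycleList A l) : 2 ≤ l.length := by
  match l, h with
  | [], h => exact absurd rfl h.1
  | [a], h => exact absurd (h.2.2.2 a rfl a rfl) (hirr a)
  | a :: b :: l, _ => simp

theorem IsCycleList.isHamiltonian [Fintype V] {A : V → V → Prop} (hirr : ∀ x, ¬ A x x)
    {l : List V} (h : IsCycleList A l) (hl : l.length = Fintype.card V) : IsHamiltonian A := by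
  have h2 := h.two_le_length hirr
  have hinj : Function.Injective fun i : Fin (Fintype.card V) => l[i.val]'(by omega) := by
    intro i j hij
    exact Fin.ext ((h.2.1.getElem_inj_iff).1 hij)
  refine ⟨fun i => l[i.val]'(by omega), ⟨by omega, hinj, fun i => ?_⟩,
    ((Fintype.bijective_iff_injective_and_card _).2 ⟨hinj, by simp⟩).2⟩
  by_cases hi : i.val + 1 < l.length
  · have := (List.isChain_iff_getElem.1 h.2.2.1) i.val hi
    simpa only [Nat.mod_eq_of_lt (by omega : i.val + 1 < Fintype.card V)] using this
  · have hi' : i.val + 1 = Fintype.card V := by omega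
    have hi2 : i.val = l.length - 1 := by omega
    simp only [hi', Nat.mod_self]
    refine h.2.2.2 _ ?_ _ ?_
    · rw [List.getLast?_eq_getElem?]
      simp [hi2, show l.length - 1 < l.length by omega]
    · simp [List.head?_eq_getElem?, show 0 < l.length by omega]

/-- The vertex `v` cannot be inserted between two consecutive vertices of `l`. -/
def NotInsertable (A : V → V → Prop) (v : V) (l : List V) : Prop :=
  l.IsChain fun p q => ¬ (A p v ∧ A v q)

theorem IsPathList.exists_insert {A : V → V → Prop} {u v y : V} {l : List V}
    (hl : IsPathList A u v l) (hy : y ∉ l) (h : ¬ NotInsertable A y l) :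
    ∃ l', IsPathList A u v l' ∧ l'.Perm (y :: l) := by
  have key : ∀ l : List V, l.IsChain A → ¬ NotInsertable A y l →
      ∃ l' : List V, l'.IsChain A ∧ l'.head? = l.head? ∧ l'.getLast? = l.getLast? ∧
        l'.Perm (y :: l) := by
    intro l
    induction l with
    | nil => simp [NotInsertable]
    | cons p l ih =>
      intro hc hn
      match l, ih, hc, hn with
      | [], _, _, hn => simp [NotInsertable] at hn
      | q :: l, ih, hc, hn =>
        rw [List.isChain_cons_cons] at hc
        by_cases hpq : A p y ∧ A y q
        · refine ⟨p :: y :: q :: l, ?_, rfl, by simp, List.Perm.swap _ _ _⟩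
          simp [hpq, hc.2]
        · have hn' : ¬ NotInsertable A y (q :: l) := by
            intro h'
            exact hn (by unfold NotInsertable; rw [List.isChain_cons_cons]; exact ⟨hpq, h'⟩)
          obtain ⟨l', h1, h2, h3, h4⟩ := ih hc.2 hn'
          refine ⟨p :: l', ?_, rfl, ?_, (h4.cons p).trans (List.Perm.swap _ _ _)⟩
          · rw [List.isChain_cons]
            exact ⟨by rw [h2]; simpa using hc.1, h1⟩
          · rw [List.getLast?_cons, h3]; simp [List.getLast?_cons]
  obtain ⟨l', h1, h2, h3, h4⟩ := key l hl.2.1 h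
  exact ⟨l', ⟨h4.nodup_iff.2 (List.nodup_cons.2 ⟨hy, hl.1⟩), h1, h2.trans hl.2.2.1,
    h3.trans hl.2.2.2⟩, h4⟩

open Classical in
/-- The number of arcs between `x` and `z`. -/
noncomputable def arcs (A : V → V → Prop) (x z : V) : ℕ :=
  (if A x z then 1 else 0) + (if A z x then 1 else 0)

theorem arcs_le_two (A : V → V → Prop) (x z : V) : arcs A x z ≤ 2 := by
  unfold arcs
  split_ifs <;> omega

theorem arcs_eq_zero {A : V → V → Prop} {x z : V} (h₁ : ¬ A x z) (h₂ : ¬ A z x) :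
    arcs A x z = 0 := by
  simp [arcs, h₁, h₂]

theorem degree_eq_sum_arcs [Fintype V] (A : V → V → Prop) (x : V) :
    degree A x = ∑ z, arcs A x z := by
  classical
  unfold degree arcs
  rw [Finset.sum_add_distrib]
  simp [Set.ncard_eq_toFinset_card']

open Classical in
theorem NotInsertable.sum_arcs_cons_le {A : V → V → Prop} {y p : V} {l : List V}
    (h : NotInsertable A y (p :: l)) :
    ((p :: l).map (arcs A y)).sum ≤ (p :: l).length + if A y p then 1 else 0 := by
  induction l generalizing p with
  | nil =>
    simp only [arcs, List.map_cons, List.map_nil, List.sum_cons, List.sum_nil, List.length_cons,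
      List.length_nil]
    split_ifs <;> omega
  | cons q l ih =>
    unfold NotInsertable at h
    rw [List.isChain_cons_cons] at h
    have := ih h.2
    rw [List.map_cons, List.sum_cons, List.length_cons]
    have hpq := h.1
    unfold arcs at this ⊢
    split_ifs at this ⊢ <;> first | omega | tauto

theorem NotInsertable.sum_arcs_le [DecidableEq V] {A : V → V → Prop} {y : V} {l : List V}
    (h : NotInsertable A y l) (hl : l.Nodup) :
    ∑ z ∈ l.toFinset, arcs A y z ≤ l.length + 1 := by
  classical
  rw [List.sum_toFinset _ hl]
  cases l with
  | nil => simp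
  | cons p l =>
    refine h.sum_arcs_cons_le.trans ?_
    split_ifs <;> omega

theorem degree_add_degree_le [Fintype V] [DecidableEq V] {A : V → V → Prop}
    (hirr : ∀ x, ¬ A x x) (K : Finset V) {x y : V} (hx : x ∉ K)
    (hxy : ¬ A x y) (hyx : ¬ A y x)
    (hK : ∑ z ∈ K, arcs A x z + ∑ z ∈ K, arcs A y z ≤ 2 * #K)
    (h₁ : ∀ z ∉ K, A x z → ¬ A z y) (h₂ : ∀ z ∉ K, A y z → ¬ A z x) :
    degree A x + degree A y + 2 ≤ 2 * Fintype.card V := by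
  rw [degree_eq_sum_arcs, degree_eq_sum_arcs, ← Finset.sum_add_sum_compl K,
    ← Finset.sum_add_sum_compl K (arcs A y)]
  have hxK : x ∈ Kᶜ := by simpa using hx
  have hout : ∑ z ∈ Kᶜ, (arcs A x z + arcs A y z) ≤ 2 * #(Kᶜ.erase x) := by
    rw [← Finset.add_sum_erase _ _ hxK, arcs_eq_zero (hirr x) (hirr x), arcs_eq_zero hyx hxy,
      mul_comm, ← smul_eq_mul, zero_add, zero_add]
    refine Finset.sum_le_card_nsmul _ _ _ fun z hz => ?_
    have hz : z ∉ K := by simpa using (Finset.mem_erase.1 hz).2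
    have h₁ := h₁ z hz
    have h₂ := h₂ z hz
    unfold arcs
    split_ifs <;> first | omega | tauto
  rw [Finset.sum_add_distrib, Finset.card_erase_of_mem hxK] at hout
  have hpos : 0 < #Kᶜ := Finset.card_pos.2 ⟨x, hxK⟩
  have := Finset.card_add_card_compl K
  omega

/-- A cycle on the list `S ++ Q` together with a bypass which starts at the last vertex `u`
of `S`, ends at its first vertex `v ≠ u`, and thus skips exactly the vertices of `Q`. -/
structure BypassedCycle (A : V → V → Prop) (m : ℕ) (S Q : List V) (u v : V) : Prop where
  isCycleList : IsCycleList A (S ++ Q)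
  length_eq : (S ++ Q).length = m
  head_eq : S.head? = some v
  last_eq : S.getLast? = some u
  ne : u ≠ v
  bypass : Bypass A {z | z ∈ S ++ Q} u v

theorem BypassedCycle.isPathList {A : V → V → Prop} {m : ℕ} {S Q : List V} {u v : V}
    (h : BypassedCycle A m S Q u v) : IsPathList A v u S :=
  ⟨h.isCycleList.2.1.of_append_left, (List.isChain_append.1 h.isCycleList.2.2.1).1, h.head_eq,
    h.last_eq⟩

theorem BypassedCycle.ne_nil {A : V → V → Prop} {m : ℕ} {S Q : List V} {u v : V}
    (h : BypassedCycle A m S Q u v) : S ≠ [] := h.isPathList.ne_nil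

theorem BypassedCycle.exists_shorter_right {A : V → V → Prop} {m : ℕ} {S Q : List V} {u v q : V}
    (h : BypassedCycle A m S Q u v) (hq : q ∈ Q) (hb : Bypass A {z | z ∈ S ++ Q} u q) :
    ∃ S' Q', BypassedCycle A m S' Q' u q ∧ Q'.length < Q.length := by
  obtain ⟨Q₁, Q₂, rfl⟩ := List.append_of_mem hq
  have hu : u ∈ S := List.mem_of_getLast? h.last_eq
  refine ⟨q :: Q₂ ++ S, Q₁, ⟨?_, ?_, rfl, ?_, ?_, ?_⟩, by simp⟩
  · have := h.isCycleList
    rw [← List.append_assoc] at this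
    simpa using this.rotate
  · rw [← h.length_eq]; simp; omega
  · rw [List.getLast?_append_of_ne_nil _ h.ne_nil, h.last_eq]
  · rintro rfl
    exact List.disjoint_of_nodup_append h.isCycleList.2.1 hu hq
  · convert hb using 1
    ext z
    simp only [Set.mem_ofPred_eq, List.mem_append, List.mem_cons]
    tauto

theorem BypassedCycle.exists_shorter_left {A : V → V → Prop} {m : ℕ} {S Q : List V} {u v q : V}
    (h : BypassedCycle A m S Q u v) (hq : q ∈ Q) (hb : Bypass A {z | z ∈ S ++ Q} q v) :
    ∃ S' Q', BypassedCycle A m S' Q' q v ∧ Q'.length < Q.length := by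
  obtain ⟨Q₁, Q₂, rfl⟩ := List.append_of_mem hq
  have hv : v ∈ S := List.mem_of_head? h.head_eq
  have he : S ++ Q₁ ++ [q] ++ Q₂ = S ++ (Q₁ ++ q :: Q₂) := by simp
  refine ⟨S ++ Q₁ ++ [q], Q₂, ⟨he ▸ h.isCycleList, he ▸ h.length_eq, ?_, by simp, ?_, he ▸ hb⟩,
    by simp; omega⟩
  · rw [List.append_assoc, List.head?_append_of_ne_nil _ h.ne_nil, h.head_eq]
  · rintro rfl
    exact List.disjoint_of_nodup_append h.isCycleList.2.1 hv hq

/-- The vertices of `S` and as many vertices of `Q` as possible can be arranged in a path from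
`v` to `u`; if no longer cycle exists, some vertex of `Q` is missed and cannot be inserted. -/
theorem BypassedCycle.exists_path_missing {A : V → V → Prop} {m : ℕ} {S Q : List V} {u v : V}
    (h : BypassedCycle A m S Q u v) (hmax : ∀ l, IsCycleList A l → l.length ≤ m) :
    ∃ T, T.Nodup ∧ S.length ≤ T.length ∧ (∀ z ∈ T, z ∈ S ++ Q) ∧
      ∃ y ∈ Q, y ∉ T ∧ NotInsertable A y T := by
  classical
  let P : ℕ → Prop := fun k =>
    ∃ T, IsPathList A v u T ∧ (∀ z ∈ S, z ∈ T) ∧ (∀ z ∈ T, z ∈ S ++ Q) ∧ T.length = k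
  have hbound : ∀ k, P k → k ≤ m := by
    rintro k ⟨T, hT, -, hTK, rfl⟩
    rw [← h.length_eq]
    exact (hT.1.subperm hTK).length_le
  have hP : P S.length := ⟨S, h.isPathList, fun _ => id, fun z hz => by simp [hz], rfl⟩
  have hgreat := Nat.findGreatest_spec (hbound _ hP) hP
  obtain ⟨T, hT, hST, hTK, hTlen⟩ := hgreat
  have hTmax : ∀ k, P k → k ≤ T.length := fun k hk =>
    hTlen ▸ Nat.le_findGreatest (hbound k hk) hk
  refine ⟨T, hT.1, hTmax _ hP, hTK, ?_⟩
  have hmiss : ∃ y ∈ S ++ Q, y ∉ T := by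
    by_contra! hall
    obtain ⟨x, x', hx, hux, hreach, hxv⟩ := h.bypass
    obtain ⟨p, hp, hpK⟩ := exists_isPathList_of_reachIn (S := {z | z ∈ S ++ Q}ᶜ) hx hreach
    have hle := hmax _ (hT.isCycleList_append hp (fun z hz hzp => hpK z hzp (hTK z hz)) hux hxv)
    have h1 := (h.isCycleList.2.1.subperm hall).length_le
    have h2 := List.length_pos_of_ne_nil hp.ne_nil
    rw [h.length_eq] at h1
    rw [List.length_append] at hle
    omega
  obtain ⟨y, hyK, hyT⟩ := hmiss
  refine ⟨y, (List.mem_append.1 hyK).resolve_left fun hy => hyT (hST y hy), hyT, ?_⟩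
  by_contra hins
  obtain ⟨T', hT', hperm⟩ := hT.exists_insert hyT hins
  have := hTmax _ ⟨T', hT', fun z hz => hperm.mem_iff.2 (by simp [hST z hz]), fun z hz => ?_, rfl⟩
  · rw [hperm.length_eq] at this
    simp at this
  · rcases List.mem_cons.1 (hperm.mem_iff.1 hz) with rfl | hz
    · exact hyK
    · exact hTK z hz

theorem BypassedCycle.notInsertable {A : V → V → Prop} {m : ℕ} {S Q : List V} {u v x : V}
    (h : BypassedCycle A m S Q u v) (hmax : ∀ l, IsCycleList A l → l.length ≤ m)
    (hx : x ∉ S ++ Q) : NotInsertable A x S := by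
  by_contra hins
  rw [List.mem_append, not_or] at hx
  obtain ⟨T, hT, hperm⟩ := h.isPathList.exists_insert hx.1 hins
  have hperm' : (T ++ Q).Perm (x :: (S ++ Q)) := hperm.append_right Q
  have hc := h.isCycleList
  have hcyc : IsCycleList A (T ++ Q) := by
    refine ⟨by simp [hT.ne_nil], hperm'.nodup_iff.2 (List.nodup_cons.2 ⟨?_, hc.2.1⟩), ?_, ?_⟩
    · simpa using hx
    · have := List.isChain_append.1 hc.2.2.1
      rw [List.isChain_append, hT.2.2.2, ← h.last_eq]
      exact ⟨hT.2.1, this.2⟩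
    · have := hc.2.2.2
      rw [List.head?_append_of_ne_nil _ h.ne_nil, List.getLast?_append] at this
      rwa [List.head?_append_of_ne_nil _ hT.ne_nil, List.getLast?_append, hT.2.2.1, hT.2.2.2,
        ← h.head_eq, ← h.last_eq]
  have h1 := hmax _ hcyc
  have h2 := h.length_eq
  rw [hperm'.length_eq] at h1
  simp only [List.length_cons] at h1
  omega

theorem not_bypassedCycle [Fintype V] [DecidableEq V] {A : V → V → Prop} (hirr : ∀ x, ¬ A x x)
    (hdeg : ∀ x y : V, x ≠ y → ¬ A x y → ¬ A y x →
      2 * Fintype.card V - 1 ≤ degree A x + degree A y)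
    {m : ℕ} (hmax : ∀ l, IsCycleList A l → l.length ≤ m) (k : ℕ) :
    ∀ {S Q : List V} {u v : V}, Q.length = k → ¬ BypassedCycle A m S Q u v := by
  induction k using Nat.strong_induction_on with
  | _ k ih =>
  rintro S Q u v rfl h
  have hright : ∀ q ∈ Q, ¬ Bypass A {z | z ∈ S ++ Q} u q := by
    intro q hq hb
    obtain ⟨S', Q', h', hlt⟩ := h.exists_shorter_right hq hb
    exact ih _ hlt rfl h'
  have hleft : ∀ q ∈ Q, ¬ Bypass A {z | z ∈ S ++ Q} q v := by
    intro q hq hb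
    obtain ⟨S', Q', h', hlt⟩ := h.exists_shorter_left hq hb
    exact ih _ hlt rfl h'
  obtain ⟨x, x', hx, hux, hreach, hxv⟩ := h.bypass
  have hxQ : ∀ q ∈ Q, ¬ A x q := fun q hq hA =>
    hright q hq ⟨x, x, hx, hux, Relation.ReflTransGen.refl, hA⟩
  have hQx : ∀ q ∈ Q, ¬ A q x := fun q hq hA => hleft q hq ⟨x, x', hx, hA, hreach, hxv⟩
  obtain ⟨T, hTn, hST, hTK, y, hyQ, hyT, hyins⟩ := h.exists_path_missing hmax
  have hn := h.isCycleList.2.1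
  have hm := h.length_eq
  have hyK : y ∈ S ++ Q := by simp [hyQ]
  have hcard : #(S ++ Q).toFinset = m := by rw [List.toFinset_card_of_nodup hn, hm]
  have hsx : ∑ z ∈ (S ++ Q).toFinset, arcs A x z ≤ S.length + 1 := by
    refine le_trans (le_of_eq ?_)
      ((h.notInsertable hmax hx).sum_arcs_le hn.of_append_left)
    symm
    refine Finset.sum_subset (by simp [Finset.subset_iff]; tauto) fun z hz hzS => ?_
    have hzQ : z ∈ Q := by
      simp only [List.mem_toFinset, List.mem_append] at hz hzS
      tauto
    exact arcs_eq_zero (hxQ z hzQ) (hQx z hzQ)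
  have hsy : ∑ z ∈ (S ++ Q).toFinset, arcs A y z + T.length + 1 ≤ 2 * m := by
    have hsub : T.toFinset ⊆ (S ++ Q).toFinset := fun z hz => by
      rw [List.mem_toFinset] at hz ⊢
      exact hTK z hz
    have hyD : y ∈ (S ++ Q).toFinset \ T.toFinset := by
      rw [Finset.mem_sdiff, List.mem_toFinset, List.mem_toFinset]
      exact ⟨hyK, hyT⟩
    have h1 := hyins.sum_arcs_le hTn
    have h2 : ∑ z ∈ (S ++ Q).toFinset \ T.toFinset, arcs A y z ≤
        #(((S ++ Q).toFinset \ T.toFinset).erase y) * 2 := by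
      rw [← Finset.add_sum_erase _ _ hyD, arcs_eq_zero (hirr y) (hirr y), zero_add]
      exact Finset.sum_le_card_nsmul _ _ _ fun z _ => arcs_le_two A y z
    have h3 := Finset.sum_sdiff (f := arcs A y) hsub
    have h4 := Finset.card_sdiff_add_card_eq_card hsub
    have h5 : 0 < #((S ++ Q).toFinset \ T.toFinset) := Finset.card_pos.2 ⟨y, hyD⟩
    rw [hcard, List.toFinset_card_of_nodup hTn] at h4
    rw [Finset.card_erase_of_mem hyD] at h2
    omega
  have hle := degree_add_degree_le (x := x) (y := y) hirr (S ++ Q).toFinset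
    (by rw [List.mem_toFinset]; exact hx) (hxQ y hyQ) (hQx y hyQ) (by omega)
    (fun z hz hxz hzy => ?_) (fun z hz hyz hzx => ?_)
  · have := hdeg x y (fun e => hx (e ▸ hyK)) (hxQ y hyQ) (hQx y hyQ)
    omega
  · rw [List.mem_toFinset] at hz
    exact hright y hyQ ⟨x, z, hx, hux, Relation.ReflTransGen.single ⟨hx, hz, hxz⟩, hzy⟩
  · rw [List.mem_toFinset] at hz
    exact hleft y hyQ ⟨z, x', hz, hyz, Relation.ReflTransGen.head ⟨hz, hx, hzx⟩ hreach, hxv⟩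

theorem IsCycleList.exists_bypassedCycle {A : V → V → Prop} {l : List V}
    (h : IsCycleList A l) {u v : V} (hu : u ∈ l) (hv : v ∈ l) (huv : u ≠ v)
    (hb : Bypass A {z | z ∈ l} u v) : ∃ S Q, BypassedCycle A l.length S Q u v := by
  obtain ⟨a, b, rfl⟩ := List.append_of_mem hu
  have hv' : v ∈ b ++ a := by
    simp only [List.mem_append, List.mem_cons] at hv ⊢
    tauto
  obtain ⟨c, d, hcd⟩ := List.append_of_mem hv'
  have hperm : (v :: d ++ [u] ++ c).Perm (a ++ u :: b) := by
    have h1 : (v :: d ++ [u] ++ c).Perm (c ++ (v :: d ++ [u])) := List.perm_append_comm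
    have h2 : c ++ (v :: d ++ [u]) = b ++ (a ++ [u]) := by
      rw [← List.append_assoc, ← hcd, List.append_assoc]
    have h3 : (b ++ (a ++ [u])).Perm (a ++ [u] ++ b) := List.perm_append_comm
    simpa using (h1.trans (List.Perm.of_eq h2)).trans h3
  refine ⟨v :: d ++ [u], c, ⟨?_, hperm.length_eq, rfl, List.getLast?_concat .., huv, ?_⟩⟩
  · apply IsCycleList.rotate
    rw [← List.append_assoc, ← hcd, List.append_assoc]
    apply IsCycleList.rotate
    simpa using h
  · convert hb using 1
    ext z
    exact hperm.mem_iff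

theorem length_eq_card_of_maximal [Fintype V] [DecidableEq V] {A : V → V → Prop}
    (hirr : ∀ x, ¬ A x x) (hs : IsStrong A)
    (hdeg : ∀ x y : V, x ≠ y → ¬ A x y → ¬ A y x →
      2 * Fintype.card V - 1 ≤ degree A x + degree A y)
    {l : List V} (hl : IsCycleList A l) (hmax : ∀ l', IsCycleList A l' → l'.length ≤ l.length) :
    l.length = Fintype.card V := by
  by_contra hne
  have hno : ∀ u ∈ l, ∀ v ∈ l, u ≠ v → ¬ Bypass A {z | z ∈ l} u v := by
    intro u hu v hv huv hb
    obtain ⟨S, Q, h⟩ := hl.exists_bypassedCycle hu hv huv hb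
    exact not_bypassedCycle hirr hdeg hmax _ rfl h
  have hcard : #l.toFinset = l.length := List.toFinset_card_of_nodup hl.2.1
  obtain ⟨b, hb⟩ : ∃ b, b ∉ l.toFinset := by
    by_contra! hall
    exact hne (by rw [← hcard, Finset.eq_univ_iff_forall.2 hall, Finset.card_univ])
  rw [List.mem_toFinset] at hb
  obtain ⟨a, ha⟩ := List.exists_mem_of_ne_nil l hl.1
  obtain ⟨u, hu, x, hx, hux⟩ := exists_arc_leaving (S := {z | z ∈ l}) (hs a b) ha hb
  obtain ⟨x', hreach, w, hw, hxw⟩ := exists_reachIn_compl_arc (hs x u) hx hu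
  obtain rfl : u = w := by
    by_contra huw
    exact hno u hu w hw huw ⟨x, x', hx, hux, hreach, hxw⟩
  have hu' : u ∈ l.toFinset := by simpa using hu
  obtain ⟨y, hy, hyu⟩ : ∃ y ∈ l.toFinset, y ≠ u := by
    refine Finset.exists_mem_ne ?_ u
    have := hl.two_le_length hirr
    omega
  have hxl : ∀ z ∈ l.toFinset, z ≠ u → ¬ A x z := fun z hz hzu hA =>
    hno u hu z (List.mem_toFinset.1 hz) hzu.symm ⟨x, x, hx, hux, Relation.ReflTransGen.refl, hA⟩
  have hlx : ∀ z ∈ l.toFinset, z ≠ u → ¬ A z x := fun z hz hzu hA =>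
    hno z (List.mem_toFinset.1 hz) u hu hzu ⟨x, x', hx, hA, hreach, hxw⟩
  have hsx : ∑ z ∈ l.toFinset, arcs A x z ≤ 2 := by
    rw [← Finset.add_sum_erase _ _ hu', Finset.sum_eq_zero fun z hz => ?_]
    · exact arcs_le_two A x u
    · rw [Finset.mem_erase] at hz
      exact arcs_eq_zero (hxl z hz.2 hz.1) (hlx z hz.2 hz.1)
  have hsy : ∑ z ∈ l.toFinset, arcs A y z ≤ #(l.toFinset.erase y) * 2 := by
    rw [← Finset.add_sum_erase _ _ hy, arcs_eq_zero (hirr y) (hirr y), zero_add]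
    exact Finset.sum_le_card_nsmul _ _ _ fun z _ => arcs_le_two A y z
  rw [Finset.card_erase_of_mem hy] at hsy
  have hpos : 0 < #l.toFinset := Finset.card_pos.2 ⟨y, hy⟩
  have hyl := List.mem_toFinset.1 hy
  have hle := degree_add_degree_le (x := x) (y := y) hirr l.toFinset
    (by rw [List.mem_toFinset]; exact hx) (hxl y hy hyu) (hlx y hy hyu) (by omega)
    (fun z hz hxz hzy => ?_) (fun z hz hyz hzx => ?_)
  · have := hdeg x y (fun e => hx (e ▸ hyl)) (hxl y hy hyu) (hlx y hy hyu)
    omega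
  · rw [List.mem_toFinset] at hz
    exact hno u hu y hyl hyu.symm
      ⟨x, z, hx, hux, Relation.ReflTransGen.single ⟨hx, hz, hxz⟩, hzy⟩
  · rw [List.mem_toFinset] at hz
    exact hno y hyl u hu hyu
      ⟨z, x', hz, hyz, Relation.ReflTransGen.head ⟨hz, hx, hzx⟩ hreach, hxw⟩

theorem exists_maximal_isCycleList [Fintype V] {A : V → V → Prop} (h : ∃ l, IsCycleList A l) :
    ∃ l, IsCycleList A l ∧ ∀ l', IsCycleList A l' → l'.length ≤ l.length := by
  classical
  obtain ⟨l₀, h₀⟩ := h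
  have hb : ∀ l, IsCycleList A l → l.length ≤ Fintype.card V := fun l hl =>
    hl.2.1.length_le_card
  have hP : ∃ l, IsCycleList A l ∧ l.length = l₀.length := ⟨l₀, h₀, rfl⟩
  obtain ⟨l, hl, hlen⟩ := Nat.findGreatest_spec
    (P := fun k => ∃ l, IsCycleList A l ∧ l.length = k) (hb _ h₀) hP
  refine ⟨l, hl, fun l' hl' => ?_⟩
  rw [hlen]
  exact Nat.le_findGreatest (hb _ hl') ⟨l', hl', rfl⟩

end Meyniel

/-- Meyniel: a strong digraph of order `n ≥ 2` in which `d(x) + d(y) ≥ 2n - 1` for every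
pair of non-adjacent vertices `x`, `y` is Hamiltonian. -/
theorem statement11 {V : Type*} [Fintype V] [DecidableEq V] (A : V → V → Prop)
    (hirr : Irreflexive A)
    (n : ℕ) (hn2 : 2 ≤ n) (hcard : Fintype.card V = n)
    (hstrong : IsStrong A)
    (hdeg : ∀ x y : V, x ≠ y → ¬ A x y → ¬ A y x →
      2 * n - 1 ≤ degree A x + degree A y) :
    IsHamiltonian A := by
  subst hcard
  obtain ⟨a, b, hab⟩ := Fintype.exists_pair_of_one_lt_card (α := V) hn2
  obtain ⟨l, hl, hmax⟩ :=
    Meyniel.exists_maximal_isCycleList (Meyniel.exists_isCycleList hstrong hab)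
  exact hl.isHamiltonian hirr (Meyniel.length_eq_card_of_maximal hirr hstrong hdeg hl hmax)
end

section
/- Let D be a non-Hamiltonian 2-strong digraph of order n such that n−1 of its vertices have degree at least n+1 and the remaining vertex z has degree at most n−2. Suppose C = x_1 x_2 … x_m z x_1, with 2 ≤ m ≤ n−3, is a longest directed cycle through z in D, the set Y = V(D) \ V(C) contains two distinct vertices y_1, y_2 that are mutually reachable in D⟨Y⟩ with d(y_i, {x_1, …, x_m}) = m+1 for each i ∈ {1,2}, and l is an integer with 2 ≤ l ≤ m−1 such that every vertex of {x_l, …, x_m} dominates both y_1 and y_2 and both y_1 and y_2 dominate every vertex of {x_1, …, x_l}. Set E = {x_1, …, x_{l−1}} and F = {x_{l+1}, …, x_m}. Then there is at least one arc of D from a vertex of E to a vertex of F. -/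
theorem ReachIn.exists_nodup_isChain {V : Type*} {A : V → V → Prop} {S : Set V} {p q v : V}
    (h : ReachIn A S p q) (hq : q ∈ S) (hv : A q v) :
    ∃ W : List V, (p :: W).Nodup ∧ (∀ w ∈ p :: W, w ∈ S) ∧ List.IsChain A ((p :: W) ++ [v]) := by
  induction h using Relation.ReflTransGen.head_induction_on with
  | refl => exact ⟨[], by simp, by simpa using hq, by simpa using hv⟩
  | @head a b hab _ ih =>
    obtain ⟨W, hnd, hS, hch⟩ := ih
    by_cases ha : a ∈ b :: W
    · obtain ⟨s, t, hst⟩ := List.append_of_mem ha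
      rw [hst] at hnd hS hch
      refine ⟨t, (List.nodup_append.1 hnd).2.1, fun w hw => hS w (by simp_all), ?_⟩
      rw [List.append_assoc] at hch
      exact (List.isChain_append.1 hch).2.1
    · exact ⟨b :: W, List.nodup_cons.2 ⟨ha, hnd⟩,
        fun w hw => (List.mem_cons.1 hw).elim (fun e => e ▸ hab.1) (hS w), by
          simpa using ⟨hab.2.2, by simpa using hch⟩⟩

theorem List.IsChain.isCycle_get {V : Type*} {A : V → V → Prop} {h : V} {t : List V}
    (hnd : (h :: t).Nodup) (ht : t ≠ []) (hch : List.IsChain A (h :: t ++ [h])) :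
    IsCycle A (h :: t).get := by
  have hpos : 0 < t.length := List.length_pos_iff.2 ht
  refine ⟨by simp only [List.length_cons]; omega, List.nodup_iff_injective_get.1 hnd, ?_⟩
  intro i
  have hi := i.isLt
  have key := List.isChain_iff_getElem.1 hch i.val (by simp at hi ⊢; omega)
  simp only [List.get_eq_getElem]
  rw [List.getElem_append_left hi] at key
  by_cases hlast : i.val + 1 < (h :: t).length
  · rw [List.getElem_append_left hlast] at key
    simp only [Nat.mod_eq_of_lt hlast]
    exact key
  · have he : i.val + 1 = (h :: t).length := by omega
    rw [List.getElem_append_right (by omega)] at key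
    simpa [he] using key

theorem List.isChain_map_range' {V : Type*} {A : V → V → Prop} {c : ℕ → V} {a k : ℕ}
    (hc : ∀ i, A (c i) (c (i + 1))) : List.IsChain A ((List.range' a k).map c) := by
  rw [List.isChain_iff_getElem]
  intro i hi
  simpa [add_assoc] using hc (a + i)

theorem List.isChain_cons_map_range'_append {V : Type*} {A : V → V → Prop} {c : ℕ → V}
    (hc : ∀ i, A (c i) (c (i + 1))) {a k : ℕ} {u v : V} {rest : List V} (hu : A u (c a))
    (hv : A (c (a + k)) v) (hrest : List.IsChain A (v :: rest)) :
    List.IsChain A (u :: ((List.range' a (k + 1)).map c ++ v :: rest)) := by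
  induction k generalizing u a with
  | zero => simpa using ⟨hu, hv, hrest⟩
  | succ k ih =>
    rw [List.range'_succ, List.map_cons, List.cons_append]
    exact List.isChain_cons_cons.2 ⟨hu, ih (hc a) (by rwa [add_right_comm, add_assoc])⟩

/-- A longest closed walk without repetitions, given as a periodic sequence `c` of period `N`,
does not allow an insertion of a walk outside of it between consecutive vertices. -/
theorem not_insert_of_longest {V : Type*} {A : V → V → Prop} {c : ℕ → V} {N : ℕ} (hN : 0 < N)
    (hper : ∀ i, c (i % N) = c i)
    (hinj : ∀ i j, c i = c j → i % N = j % N) (hc : ∀ i, A (c i) (c (i + 1)))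
    (hlong : ∀ (h : V) (t : List V), (h :: t).Nodup → List.IsChain A (h :: t ++ [h]) →
      c 0 ∈ h :: t → (h :: t).length ≤ N)
    {Y : Set V} (hY : ∀ i, c i ∉ Y) {k : ℕ} {p q : V} (hp : A (c k) p) (hq : A q (c (k + 1)))
    (hqY : q ∈ Y) (hpq : ReachIn A Y p q) : False := by
  obtain ⟨W, hnd, hWY, hch⟩ := hpq.exists_nodup_isChain hqY hq
  obtain ⟨M, rfl⟩ : ∃ M, N = M + 1 := ⟨N - 1, by omega⟩
  have hlist : (List.range' (k + 1) (M + 1)).map c =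
      c (k + 1) :: (List.range' (k + 2) M).map c := by simp [List.range'_succ]
  have hlist' : (List.range' (k + 1) (M + 1)).map c =
      (List.range' (k + 1) M).map c ++ [c k] := by
    rw [List.range'_concat, List.map_append]
    simp only [List.map_cons, List.map_nil, one_mul]
    rw [← hper (k + 1 + M), show k + 1 + M = k + (M + 1) by ring, Nat.add_mod_right, hper]
  have hnodup : ((List.range' (k + 1) (M + 1)).map c).Nodup := by
    refine List.Nodup.map_on ?_ List.nodup_range'
    intro i hi j hj hij
    simp only [List.mem_range'_1] at hi hj
    exact Nat.mod_injOn_Ico (k + 1) (M + 1) (by simpa using hi) (by simpa using hj) (hinj i j hij)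
  have hmem : c 0 ∈ (List.range' (k + 1) (M + 1)).map c := by
    obtain ⟨i, hi, hi0⟩ : ∃ i ∈ Finset.Ico (k + 1) (k + 1 + (M + 1)), i % (M + 1) = 0 := by
      have := Nat.image_Ico_mod (k + 1) (M + 1)
      have h0 : 0 ∈ Finset.range (M + 1) := by simp
      rw [← this] at h0
      simpa using h0
    refine List.mem_map.2 ⟨i, by simpa [List.mem_range'_1] using hi, ?_⟩
    rw [← hper i, hi0]
  have := hlong (c (k + 1)) ((List.range' (k + 2) M).map c ++ p :: W) ?_ ?_ ?_
  · simp at this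
  · rw [← List.cons_append, ← hlist, List.nodup_append]
    refine ⟨hnodup, hnd, ?_⟩
    rintro a ha b hb rfl
    obtain ⟨i, -, rfl⟩ := List.mem_map.1 ha
    exact hY i (hWY _ hb)
  · rw [← List.cons_append, ← hlist, hlist', List.append_assoc, List.append_assoc,
      List.singleton_append, List.isChain_split]
    refine ⟨?_, by simpa using ⟨hp, by simpa using hch⟩⟩
    rw [← hlist']
    exact List.isChain_map_range' hc
  · rw [← List.cons_append, ← hlist]
    exact List.mem_append_left _ hmem

/-- A vertex that cannot be inserted into a closed walk of period `N` has at most `N` arcs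
from and to its vertices. -/
theorem ncard_add_ncard_le_of_not_insert {V : Type*} [Finite V] {A : V → V → Prop} {c : ℕ → V}
    {N : ℕ} (hN : 0 < N) (hper : ∀ i, c (i % N) = c i)
    {q : V} (hq : ∀ k, A (c k) q → ¬ A q (c (k + 1))) :
    {y ∈ Set.range c | A q y}.ncard + {y ∈ Set.range c | A y q}.ncard ≤ N := by
  classical
  have hout : {y ∈ Set.range c | A q y}.ncard ≤
      ((Finset.range N).filter fun i => A q (c (i + 1))).card := by
    rw [← Set.ncard_coe_finset]
    refine (Set.ncard_le_ncard (t := (fun i => c (i + 1)) '' _) ?_ (Set.toFinite _)).trans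
      (Set.ncard_image_le (Finset.finite_toSet _))
    rintro _ ⟨⟨i, rfl⟩, hi⟩
    have hi' : c ((i + (N - 1)) % N + 1) = c i := by
      rw [← hper, Nat.mod_add_mod, show i + (N - 1) + 1 = i + N by omega, Nat.add_mod_right, hper]
    refine ⟨(i + (N - 1)) % N, ?_, hi'⟩
    simpa [Nat.mod_lt _ hN, hi'] using hi
  have hin : {y ∈ Set.range c | A y q}.ncard ≤
      ((Finset.range N).filter fun i => A (c i) q).card := by
    rw [← Set.ncard_coe_finset]
    refine (Set.ncard_le_ncard (t := c '' _) ?_ (Set.toFinite _)).trans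
      (Set.ncard_image_le (Finset.finite_toSet _))
    rintro _ ⟨⟨i, rfl⟩, hi⟩
    exact ⟨i % N, by simpa [Nat.mod_lt _ hN, hper] using hi, hper i⟩
  have hdisj : Disjoint ((Finset.range N).filter fun i => A q (c (i + 1)))
      ((Finset.range N).filter fun i => A (c i) q) := by
    rw [Finset.disjoint_filter]
    exact fun i _ h1 h2 => hq i h2 h1
  have := Finset.card_le_card (Finset.union_subset
    (Finset.filter_subset (fun i => A q (c (i + 1))) (Finset.range N))
    (Finset.filter_subset (fun i => A (c i) q) (Finset.range N)))
  rw [Finset.card_union_of_disjoint hdisj, Finset.card_range] at this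
  omega

theorem degree_eq_degreeIn_add_compl {V : Type*} [Finite V] (A : V → V → Prop) (v : V)
    (S : Set V) : degree A v = degreeIn A v S + degreeIn A v Sᶜ := by
  have key (P : V → Prop) : {y | P y}.ncard = {y ∈ S | P y}.ncard + {y ∈ Sᶜ | P y}.ncard := by
    rw [← Set.ncard_union_eq _ (Set.toFinite _) (Set.toFinite _)]
    · congr 1
      ext y
      by_cases hy : y ∈ S <;> simp [hy]
    · rw [Set.disjoint_left]
      exact fun y h1 h2 => h2.1 h1.1
  rw [degree, degreeIn, degreeIn, key, key (fun y => A y v)]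
  ring

theorem degreeIn_add_degreeIn_le_of_not_reachIn {V : Type*} [Finite V] {A : V → V → Prop}
    {Y : Set V} {u v : V} (hu : u ∈ Y) (hv : v ∈ Y) (huv : ¬ ReachIn A Y u v)
    (hvu : ¬ ReachIn A Y v u) : degreeIn A u Y + degreeIn A v Y ≤ 2 * Y.ncard := by
  have key {a b : V} (ha : a ∈ Y) (hb : b ∈ Y) (hab : ¬ ReachIn A Y a b) :
      {y ∈ Y | A a y}.ncard + {y ∈ Y | A y b}.ncard ≤ Y.ncard := by
    rw [← Set.ncard_union_eq _ (Set.toFinite _) (Set.toFinite _)]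
    · exact Set.ncard_le_ncard (Set.union_subset (Set.sep_subset _ _) (Set.sep_subset _ _))
        (Set.toFinite _)
    · rw [Set.disjoint_left]
      rintro w ⟨hw, h1⟩ ⟨-, h2⟩
      exact hab ((Relation.ReflTransGen.single ⟨ha, hw, h1⟩).tail ⟨hw, hb, h2⟩)
  have h1 := key hu hv huv
  have h2 := key hv hu hvu
  rw [degreeIn, degreeIn]
  omega

/-- A walk from `s` to `t` inside `S` leaves every set containing `s` but not `t`. -/
theorem ReachIn.exists_exit {V : Type*} {A : V → V → Prop} {S T : Set V} {s t : V}
    (h : ReachIn A S s t) (hs : s ∈ T) (ht : t ∉ T) :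
    ∃ u v, u ∈ T ∧ v ∉ T ∧ u ∈ S ∧ v ∈ S ∧ A u v := by
  by_contra! hcon
  apply ht
  clear ht
  induction h with
  | refl => exact hs
  | tail _ hab ih =>
    by_contra hb
    exact hcon _ _ ih hb hab.1 hab.2.1 hab.2.2

/-- The longer cycle obtained by splitting the cycle `c 0, …, c m` at `i < j`, swapping its two
parts and joining them through `y₁` and `y₂`. -/
theorem not_swap_of_longest {V : Type*} {A : V → V → Prop} {c : ℕ → V} {m : ℕ}
    (hinj : ∀ i j, i ≤ m → j ≤ m → c i = c j → i = j) (hc : ∀ i, A (c i) (c (i + 1)))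
    (hlong : ∀ (h : V) (t : List V), (h :: t).Nodup → List.IsChain A (h :: t ++ [h]) →
      c 0 ∈ h :: t → (h :: t).length ≤ m + 1)
    {y₁ y₂ : V} (hy₁ : ∀ i, c i ≠ y₁) (hy₂ : ∀ i, c i ≠ y₂) (hne : y₁ ≠ y₂) {i j : ℕ}
    (hi : 1 ≤ i) (hij : i + 1 < j) (hj : j ≤ m) (hiz : A (c i) (c 0)) (hzj : A (c 0) (c j))
    (hm : A (c m) y₂) (h2 : A y₂ (c (i + 1))) (h1 : A (c (j - 1)) y₁) (h0 : A y₁ (c 1)) :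
    False := by
  obtain ⟨i, rfl⟩ : ∃ a, i = a + 1 := ⟨i - 1, by omega⟩
  obtain ⟨b, rfl⟩ : ∃ b, j = i + 2 + b + 1 := ⟨j - i - 3, by omega⟩
  obtain ⟨d, rfl⟩ : ∃ d, m = i + 2 + b + 1 + d := ⟨m - (i + 2 + b + 1), by omega⟩
  have := hlong (c 0) ((List.range' (i + 2 + b + 1) (d + 1)).map c ++
    y₂ :: ((List.range' (i + 2) (b + 1)).map c ++ y₁ :: (List.range' 1 (i + 1)).map c)) ?_ ?_ ?_
  · simp at this
    omega
  · simp only [List.nodup_cons, List.nodup_append, List.mem_append, List.mem_cons, List.mem_map,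
      List.mem_range'_1]
    have hnodup (a k : ℕ) (hak : a + k ≤ i + 2 + b + 1 + d + 1) :
        ((List.range' a k).map c).Nodup := by
      refine List.Nodup.map_on ?_ List.nodup_range'
      intro p hp q hq hpq
      simp only [List.mem_range'_1] at hp hq
      exact hinj p q (by omega) (by omega) hpq
    have h₁ := hnodup (i + 2 + b + 1) (d + 1) (by omega)
    have h₂ := hnodup (i + 2) (b + 1) (by omega)
    have h₃ := hnodup 1 (i + 1) (by omega)
    refine ⟨?_, h₁, ⟨?_, h₂, ⟨?_, h₃⟩, ?_⟩, ?_⟩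
    · rintro (⟨p, hp, h⟩ | h | ⟨p, hp, h⟩ | h | ⟨p, hp, h⟩)
      · have := hinj _ _ (by omega) (by omega) h; omega
      · exact hy₂ 0 h
      · have := hinj _ _ (by omega) (by omega) h; omega
      · exact hy₁ 0 h
      · have := hinj _ _ (by omega) (by omega) h; omega
    · rintro (⟨p, hp, h⟩ | h | ⟨p, hp, h⟩)
      · exact hy₂ p h
      · exact hne h.symm
      · exact hy₂ p h
    · rintro ⟨p, hp, h⟩
      exact hy₁ p h
    · rintro _ ⟨p, hp, rfl⟩ _ (rfl | ⟨q, hq, rfl⟩) h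
      · exact hy₁ p h
      · have := hinj _ _ (by omega) (by omega) h; omega
    · rintro _ ⟨p, hp, rfl⟩ _ (rfl | ⟨q, hq, rfl⟩ | rfl | ⟨q, hq, rfl⟩) h
      · exact hy₂ p h
      · have := hinj _ _ (by omega) (by omega) h; omega
      · exact hy₁ p h
      · have := hinj _ _ (by omega) (by omega) h; omega
  · have hchain := List.isChain_cons_map_range'_append hc hzj (k := d) hm <|
      List.isChain_cons_map_range'_append hc h2 (k := b) (by simpa [add_right_comm] using h1) <|
      List.isChain_cons_map_range'_append hc h0 (k := i) (rest := []) (by rwa [add_comm 1 i])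
        (List.isChain_singleton _)
    simpa using hchain
  · simp

/-- Claim 1(ii): in the situation of Lemma 4 with `l` as in (1), set
`E = {x₁, …, x_{l-1}}` (indices `≤ l - 2` in `Fin m`) and `F = {x_{l+1}, …, x_m}`
(indices `≥ l` in `Fin m`).  Then there is at least one arc from a vertex of `E`
to a vertex of `F`. -/
theorem statement14 {V : Type*} [Fintype V] [DecidableEq V] (A : V → V → Prop)
    (hirr : Irreflexive A)
    (n : ℕ) (hcard : Fintype.card V = n)
    (h2strong : IsKStrong A 2)
    (hnonham : ¬ IsHamiltonian A)
    (z : V)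
    (hdeg : ∀ v : V, v ≠ z → n + 1 ≤ degree A v)
    (hdegz : degree A z ≤ n - 2)
    (m : ℕ) (hm2 : 2 ≤ m) (hmn : m ≤ n - 3)
    -- the cycle C = x₁ x₂ … x_m z x₁ of length m + 1 through z
    (x : Fin m → V) (hxinj : Function.Injective x) (hzx : z ∉ Set.range x)
    (harc : ∀ (i : Fin m) (h : i.val + 1 < m), A (x i) (x ⟨i.val + 1, h⟩))
    (harcz1 : A (x ⟨m - 1, by omega⟩) z)
    (harcz2 : A z (x ⟨0, by omega⟩))
    -- C is a longest cycle through z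
    (hlongest : ∀ (r : ℕ) (c : Fin r → V), IsCycle A c → z ∈ Set.range c → r ≤ m + 1)
    (Y : Set V) (hY : Y = (Set.range x ∪ {z})ᶜ)
    (y₁ y₂ : V) (hy₁ : y₁ ∈ Y) (hy₂ : y₂ ∈ Y) (hyne : y₁ ≠ y₂)
    -- y₁ and y₂ are mutually reachable in D⟨Y⟩
    (hreach₁ : ReachIn A Y y₁ y₂) (hreach₂ : ReachIn A Y y₂ y₁)
    (hdy₁ : degreeIn A y₁ (Set.range x) = m + 1)
    (hdy₂ : degreeIn A y₂ (Set.range x) = m + 1)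
    (l : ℕ) (hl2 : 2 ≤ l) (hlm : l ≤ m - 1)
    (hdom₁ : ∀ i : Fin m, l - 1 ≤ i.val → A (x i) y₁ ∧ A (x i) y₂)
    (hdom₂ : ∀ i : Fin m, i.val ≤ l - 1 → A y₁ (x i) ∧ A y₂ (x i)) :
    ∃ i j : Fin m, i.val ≤ l - 2 ∧ l ≤ j.val ∧ A (x i) (x j) := by
  subst hcard
  by_contra! hEF
  set c : ℕ → V := fun k => if h : k % (m + 1) = 0 then z else
    x ⟨k % (m + 1) - 1, by have := Nat.mod_lt k (show 0 < m + 1 by omega); omega⟩ with hcdef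
  have hc0 : c 0 = z := by simp [hcdef]
  have hcx : ∀ i : Fin m, c (i.val + 1) = x i := by
    intro i
    simp [hcdef, Nat.mod_eq_of_lt (show i.val + 1 < m + 1 by omega)]
  have hper : ∀ i, c (i % (m + 1)) = c i := by intro i; simp [hcdef]
  have hinj : ∀ i j, c i = c j → i % (m + 1) = j % (m + 1) := by
    intro i j hij
    simp only [hcdef] at hij
    split_ifs at hij with h1 h2 h2
    · omega
    · exact absurd ⟨_, hij.symm⟩ hzx
    · exact absurd ⟨_, hij⟩ hzx
    · have := congrArg Fin.val (hxinj hij)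
      simp only at this
      omega
  have hinj' : ∀ i j, i ≤ m → j ≤ m → c i = c j → i = j := by
    intro i j hi hj hij
    simpa [Nat.mod_eq_of_lt (Nat.lt_succ_of_le hi), Nat.mod_eq_of_lt (Nat.lt_succ_of_le hj)]
      using hinj i j hij
  have hc' : ∀ i, i ≤ m → A (c i) (c (i + 1)) := by
    intro i hi
    rcases Nat.eq_zero_or_pos i with rfl | hpos
    · rw [hc0, hcx ⟨0, by omega⟩]; exact harcz2
    obtain ⟨i, rfl⟩ : ∃ a, i = a + 1 := ⟨i - 1, by omega⟩
    rw [hcx ⟨i, by omega⟩]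
    rcases Nat.lt_or_ge (i + 1) m with h | h
    · rw [hcx ⟨i + 1, h⟩]; exact harc ⟨i, by omega⟩ h
    · obtain rfl : m = i + 1 := by omega
      rw [← hper, Nat.mod_self, hc0]; exact harcz1
  have hc : ∀ i, A (c i) (c (i + 1)) := by
    intro i
    have := hc' (i % (m + 1)) (Nat.lt_succ_iff.1 (Nat.mod_lt _ (Nat.succ_pos m)))
    rwa [hper, ← hper (i % (m + 1) + 1), Nat.mod_add_mod, hper] at this
  have hrange : Set.range c = Set.range x ∪ {z} := by
    ext v
    constructor
    · rintro ⟨i, rfl⟩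
      by_cases h : i % (m + 1) = 0
      · right; simp [hcdef, h]
      · left; simp [hcdef, h]
    · rintro (⟨i, rfl⟩ | rfl)
      · exact ⟨_, hcx i⟩
      · exact ⟨0, hc0⟩
  rw [← hrange] at hY
  have hcY : ∀ i, c i ∉ Y := fun i hi => by rw [hY] at hi; exact hi ⟨i, rfl⟩
  have hlong : ∀ (h : V) (t : List V), (h :: t).Nodup → List.IsChain A (h :: t ++ [h]) →
      c 0 ∈ h :: t → (h :: t).length ≤ m + 1 := by
    intro h t hnd hch hz
    rcases eq_or_ne t [] with rfl | ht
    · simp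
    · refine hlongest _ _ (List.IsChain.isCycle_get hnd ht hch) ?_
      rw [hc0] at hz
      exact List.mem_iff_get.1 hz
  have hcover : ∀ v, v ∉ Y → ∃ i ≤ m, c i = v := by
    intro v hv
    rw [hY, Set.notMem_compl_iff] at hv
    obtain ⟨i, rfl⟩ := hv
    exact ⟨i % (m + 1), Nat.lt_succ_iff.1 (Nat.mod_lt _ (Nat.succ_pos m)), hper i⟩
  have hins : ∀ {k p q}, A (c k) p → A q (c (k + 1)) → q ∈ Y → ¬ ReachIn A Y p q :=
    fun h1 h2 h3 h4 => not_insert_of_longest (Nat.succ_pos m) hper hinj hc hlong hcY h1 h2 h3 h4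
  have hin : ∀ i, l ≤ i → i ≤ m → A (c i) y₁ ∧ A (c i) y₂ := by
    intro i h1 h2
    obtain ⟨i, rfl⟩ : ∃ a, i = a + 1 := ⟨i - 1, by omega⟩
    rw [hcx ⟨i, by omega⟩]; exact hdom₁ ⟨i, by omega⟩ (by simp only; omega)
  have hout : ∀ i, 1 ≤ i → i ≤ l → A y₁ (c i) ∧ A y₂ (c i) := by
    intro i h1 h2
    obtain ⟨i, rfl⟩ : ∃ a, i = a + 1 := ⟨i - 1, by omega⟩
    rw [hcx ⟨i, by omega⟩]; exact hdom₂ ⟨i, by omega⟩ (by simp only; omega)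
  have hEF' : ∀ i j, 1 ≤ i → i < l → l < j → j ≤ m → ¬ A (c i) (c j) := by
    intro i j h1 h2 h3 h4
    obtain ⟨i, rfl⟩ : ∃ a, i = a + 1 := ⟨i - 1, by omega⟩
    obtain ⟨j, rfl⟩ : ∃ a, j = a + 1 := ⟨j - 1, by omega⟩
    rw [hcx ⟨i, by omega⟩, hcx ⟨j, by omega⟩]
    exact hEF _ _ (by simp only; omega) (by simp only; omega)
  have hdegY : ∀ q ∈ Y, Y.ncard + 1 ≤ degreeIn A q Y := by
    intro q hq
    have h1 := hdeg q (by rintro rfl; exact hcY 0 (hc0 ▸ hq))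
    rw [degree_eq_degreeIn_add_compl A q (Set.range c), ← hY] at h1
    have h2 : degreeIn A q (Set.range c) ≤ m + 1 :=
      ncard_add_ncard_le_of_not_insert (Nat.succ_pos m) hper
        fun k h1 h2 => hins h1 h2 hq Relation.ReflTransGen.refl
    have h3 : (Set.range c).ncard = m + 1 := by
      rw [hrange, Set.union_singleton, Set.ncard_insert_of_notMem hzx, ← Set.image_univ,
        Set.ncard_image_of_injective _ hxinj, Set.ncard_univ, Nat.card_eq_fintype_card,
        Fintype.card_fin]
    have h4 := Set.ncard_add_ncard_compl (Set.range c)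
    rw [← hY, h3, Nat.card_eq_fintype_card] at h4
    omega
  have hcomp : ∀ q ∈ Y, ReachIn A Y q y₁ ∨ ReachIn A Y y₁ q := by
    intro q hq
    by_contra! h
    have h1 := degreeIn_add_degreeIn_le_of_not_reachIn hq hy₁ h.1 h.2
    have h2 := hdegY q hq
    have h3 := hdegY y₁ hy₁
    omega
  have hreach : ReachIn A {c l}ᶜ (c 1) (c m) := by
    refine h2strong.2 {c l} (by simp) _ ?_ _ ?_
    · intro h
      have := hinj' _ _ (by omega) (by omega) h
      omega
    · intro h
      have := hinj' _ _ (by omega) (by omega) h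
      omega
  have hz_in : ∃ i, 1 ≤ i ∧ i < l ∧ A (c i) (c 0) := by
    obtain ⟨u, v, hu, hv, -, hvl, huv⟩ := hreach.exists_exit
      (T := {v | (∃ i, 1 ≤ i ∧ i < l ∧ c i = v) ∨ (v ∈ Y ∧ ¬ ReachIn A Y v y₁)})
      (Or.inl ⟨1, le_rfl, by omega, rfl⟩) (by
        rintro (⟨i, h1, h2, h3⟩ | h)
        · have := hinj' _ _ (by omega) (by omega) h3
          omega
        · exact hcY _ h.1)
    simp only [Set.mem_ofPred_eq, not_or, not_and, not_not] at hv
    by_cases hvY : v ∈ Y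
    · have hvy := hv.2 hvY
      rcases hu with ⟨i, h1, h2, rfl⟩ | ⟨huY, hu⟩
      · exact absurd hvy (hins huv (hout (i + 1) (by omega) (by omega)).1 hy₁)
      · exact absurd (hvy.head ⟨huY, hvY, huv⟩) hu
    · obtain ⟨j, hj, rfl⟩ := hcover v hvY
      have hjl : j ≠ l := by rintro rfl; exact hvl rfl
      rcases Nat.eq_zero_or_pos j with rfl | hj0
      · rcases hu with ⟨i, h1, h2, rfl⟩ | ⟨huY, hu⟩
        · exact ⟨i, h1, h2, huv⟩
        · refine absurd ((hcomp u huY).resolve_left hu)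
            (hins (k := m) (hin m (by omega) le_rfl).1 ?_ huY)
          rwa [← hper, Nat.mod_self]
      · have hlj : l < j := by
          by_contra h
          exact hv.1 ⟨j, hj0, by omega, rfl⟩
        rcases hu with ⟨i, h1, h2, rfl⟩ | ⟨huY, hu⟩
        · exact absurd huv (hEF' i j h1 h2 hlj hj)
        · refine absurd ((hcomp u huY).resolve_left hu)
            (hins (k := j - 1) (hin _ (by omega) (by omega)).1 ?_ huY)
          rwa [Nat.sub_add_cancel hj0]
  have hz_out : ∃ j, l < j ∧ j ≤ m ∧ A (c 0) (c j) := by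
    obtain ⟨u, v, hu, hv, hul, -, huv⟩ := hreach.exists_exit
      (T := {v | ¬ ((∃ j, l < j ∧ j ≤ m ∧ c j = v) ∨ (v ∈ Y ∧ ¬ ReachIn A Y y₁ v))})
      (by
        rintro (⟨i, h1, h2, h3⟩ | h)
        · have := hinj' _ _ (by omega) (by omega) h3
          omega
        · exact hcY _ h.1)
      (fun h => h (Or.inl ⟨m, by omega, le_rfl, rfl⟩))
    simp only [Set.mem_ofPred_eq, not_not] at hv
    simp only [Set.mem_ofPred_eq, not_or, not_and, not_not] at hu
    by_cases huY : u ∈ Y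
    · have huy := hu.2 huY
      rcases hv with ⟨j, h1, h2, rfl⟩ | ⟨hvY, hv⟩
      · refine absurd huy (hins (k := j - 1) (hin _ (by omega) (by omega)).1 ?_ huY)
        rwa [Nat.sub_add_cancel (by omega)]
      · exact absurd (huy.tail ⟨huY, hvY, huv⟩) hv
    · obtain ⟨i, hi, rfl⟩ := hcover u huY
      have hil : i ≠ l := by rintro rfl; exact hul rfl
      have hil' : i < l := by
        by_contra h
        exact hu.1 ⟨i, by omega, hi, rfl⟩
      rcases hv with ⟨j, h1, h2, rfl⟩ | ⟨hvY, hv⟩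
      · rcases Nat.eq_zero_or_pos i with rfl | hi0
        · exact ⟨j, h1, h2, huv⟩
        · exact absurd huv (hEF' i j hi0 hil' h1 h2)
      · exact absurd ((hcomp v hvY).resolve_right hv)
          (hins huv (hout (i + 1) (by omega) (by omega)).1 hy₁)
  obtain ⟨i, hi1, hil, hiz⟩ := hz_in
  obtain ⟨j, hlj, hjm, hzj⟩ := hz_out
  exact not_swap_of_longest hinj' hc hlong (fun k h => hcY k (h ▸ hy₁))
    (fun k h => hcY k (h ▸ hy₂)) hyne hi1 (by omega) hjm hiz hzj (hin m (by omega) le_rfl).2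
    (hout (i + 1) (by omega) (by omega)).2 (hin (j - 1) (by omega) (by omega)).1
    (hout 1 le_rfl (by omega)).1
end
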